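/- arXiv:2109.04613 — 2 statements merged into one kernel-verified Lean document; each statement's English description precedes it below -/
import Mathlib

section
/- Let R be a commutative noetherian ring with identity, a an ideal of R, and n ∈ {0, 1, 2}. Let M be an R-module belonging to the class FD_{≤ n} (there exists a finitely generated submodule N of M with dim_R M/N ≤ n) such that Supp_R M ⊆ V(a). Then M is a-cofinite if and only if Ext^i_R(R/a, M) is a finitely generated R-module for every i ≤ n. -/
universe u

open CategoryTheory

/-- `Ext^i_R(R/a, M)` as an `R`-module, for `M : ModuleCat R`. -/
noncomputable def extQuot {R : Type u} [CommRing R] (a : Ideal R) (i : ℕ)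
    (M : ModuleCat.{u} R) : ModuleCat.{u} R :=
  ((Ext R (ModuleCat.{u} R) i).obj (Opposite.op (ModuleCat.of R (R ⧸ a)))).obj M

/-- An `R`-module `M` is `a`-cofinite if `Supp M ⊆ V(a)` and `Ext^i_R(R/a, M)` is a
finitely generated `R`-module for every `i ≥ 0`. -/
def IsCofinite {R : Type u} [CommRing R] (a : Ideal R) (M : ModuleCat.{u} R) : Prop :=
  Module.support R M ⊆ PrimeSpectrum.zeroLocus (a : Set R) ∧
    ∀ i : ℕ, Module.Finite R (extQuot a i M)

/-!
Finitely generated modules have finitely generated `Ext`, so `M` may be replaced by `M / N` and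
one assumes `dim M ≤ n`. Multiplication by `x ∈ a` is zero on `Ext^i(R/a, M)`; if its kernel and
cokernel on `M` have `Ext` in a Serre class `T`, then it is also an isomorphism modulo `T`, so
that `Ext^i(R/a, M)` belongs to `T`.

Let `Supp M = V(I)`. If `S` is the complement of the minimal primes over `I`, then `S⁻¹M` is
Artinian as soon as `(0 :_M a)` is finitely generated. Hence the cokernels that matter are
`S`-torsion, of smaller dimension, and the criterion settles `n ≤ 1` by induction.

For `n = 2`, the criterion with `T` the modules which become finitely generated on inverting
some element of `S` yields `y ∈ S` and a finitely generated `N ⊆ X = Ext^i(R/a, M)` such that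
`X / N` is `y`-torsion. Since `V(I, y)` has dimension at most `1`, multiplication by `y` on `X` has
finitely generated kernel and cokernel, so `X` agrees up to finitely generated modules with a
`y`-divisible `y`-torsion module `D` whose `(0 :_D y)` is finitely generated. Localizing `M` at
a nonmaximal prime lowers the dimension, so the case `n = 1` shows that `D` is supported at
maximal ideals. After `y`-adic completion the annihilator of `D` therefore contains some `z`
with `dim V(I, z) ≤ 1`: multiplication by `z` is an isomorphism modulo finitely generated
modules on `X` and zero on `D`. So `D` is finitely generated, `y`-divisible and `y`-torsion,
hence zero.
-/

section SerreClass

variable {R : Type u} [CommRing R] (T : ObjectProperty (ModuleCat.{u} R)) [T.IsSerreClass]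
  {M M₁ M₂ M₃ : Type u} [AddCommGroup M] [Module R M] [AddCommGroup M₁] [Module R M₁]
  [AddCommGroup M₂] [Module R M₂] [AddCommGroup M₃] [Module R M₃]

lemma prop_of_exact {f : M₁ →ₗ[R] M₂} {g : M₂ →ₗ[R] M₃} (h : Function.Exact f g)
    (h₁ : T (ModuleCat.of R M₁)) (h₃ : T (ModuleCat.of R M₃)) : T (ModuleCat.of R M₂) :=
  T.prop_X₂_of_exact (S := ShortComplex.mk (ModuleCat.ofHom f) (ModuleCat.ofHom g)
    (ModuleCat.hom_ext h.linearMap_comp_eq_zero))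
    ((ShortComplex.ShortExact.moduleCat_exact_iff_function_exact _).2 h) h₁ h₃

lemma prop_of_injective {f : M₁ →ₗ[R] M₂} (hf : Function.Injective f)
    (h₂ : T (ModuleCat.of R M₂)) : T (ModuleCat.of R M₁) :=
  have : Mono (ModuleCat.ofHom f) := (ModuleCat.mono_iff_injective _).2 hf
  T.prop_of_mono (ModuleCat.ofHom f) h₂

lemma prop_of_surjective {f : M₁ →ₗ[R] M₂} (hf : Function.Surjective f)
    (h₁ : T (ModuleCat.of R M₁)) : T (ModuleCat.of R M₂) :=
  have : Epi (ModuleCat.ofHom f) := (ModuleCat.epi_iff_surjective _).2 hf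
  T.prop_of_epi (ModuleCat.ofHom f) h₁

lemma prop_of_subsingleton [Subsingleton M] : T (ModuleCat.of R M) :=
  T.prop_of_isZero (ModuleCat.isZero_of_subsingleton _)

lemma isSerreClass_of_exact {T : ObjectProperty (ModuleCat.{u} R)}
    (zero : T (ModuleCat.of R PUnit))
    (middle : ∀ (M₁ M₂ M₃ : Type u) [AddCommGroup M₁] [AddCommGroup M₂] [AddCommGroup M₃]
      [Module R M₁] [Module R M₂] [Module R M₃] (f : M₁ →ₗ[R] M₂) (g : M₂ →ₗ[R] M₃),
      Function.Exact f g → T (ModuleCat.of R M₁) → T (ModuleCat.of R M₃) →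
        T (ModuleCat.of R M₂)) : T.IsSerreClass where
  exists_zero := ⟨_, ModuleCat.isZero_of_subsingleton (ModuleCat.of R PUnit), zero⟩
  prop_of_mono f _ h := middle PUnit _ _ 0 f.hom
    ((LinearMap.exact_zero_iff_injective _ _).2 ((ModuleCat.mono_iff_injective f).1 ‹_›)) zero h
  prop_of_epi f _ h := middle _ _ PUnit f.hom 0
    ((LinearMap.exact_zero_iff_surjective _ _).2 ((ModuleCat.epi_iff_surjective f).1 ‹_›)) h zero
  prop_X₂_of_shortExact h h₁ h₃ := middle _ _ _ _ _
    ((ShortComplex.ShortExact.moduleCat_exact_iff_function_exact _).1 h.exact) h₁ h₃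

lemma isoModSerre_ofHom_iff (f : M₁ →ₗ[R] M₂) : T.isoModSerre (ModuleCat.ofHom f) ↔
    T (ModuleCat.of R (LinearMap.ker f)) ∧ T (ModuleCat.of R (M₂ ⧸ LinearMap.range f)) := by
  rw [T.isoModSerre_iff, T.monoModSerre_iff, T.epiModSerre_iff,
    T.prop_iff_of_iso (ModuleCat.kernelIsoKer _),
    T.prop_iff_of_iso (ModuleCat.cokernelIsoRangeQuotient _)]
  rfl

end SerreClass

section Ext

variable {R : Type u} [CommRing R] (C : Type u) [AddCommGroup C] [Module R C]
  {M M₁ M₂ M₃ : Type u} [AddCommGroup M] [Module R M] [AddCommGroup M₁] [Module R M₁]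
  [AddCommGroup M₂] [Module R M₂] [AddCommGroup M₃] [Module R M₃]

variable (R M) in
/-- `Ext^i_R(C, M)` for unbundled modules, in the derived category sense of `Abelian.Ext` (which
carries the long exact sequences); see `finite_extQuot_iff` for the comparison with `extQuot`. -/
abbrev ExtModule (i : ℕ) : Type u := Abelian.Ext (ModuleCat.of R C) (ModuleCat.of R M) i

namespace ExtModule

open Abelian

/-- The map `Ext^i_R(C, M₁) → Ext^i_R(C, M₂)` induced by a linear map `M₁ → M₂`. -/
noncomputable def map (φ : M₁ →ₗ[R] M₂) (i : ℕ) : ExtModule R C M₁ i →ₗ[R] ExtModule R C M₂ i :=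
  (Ext.mk₀ (ModuleCat.ofHom φ)).postcompOfLinear R _ (add_zero i)

lemma map_comp (ψ : M₂ →ₗ[R] M₃) (φ : M₁ →ₗ[R] M₂) (i : ℕ) :
    map C (ψ ∘ₗ φ) i = map C ψ i ∘ₗ map C φ i := by
  ext e
  simp [map, ModuleCat.ofHom_comp]

lemma map_lsmul (r : R) (i : ℕ) :
    map C (LinearMap.lsmul R M r) i = LinearMap.lsmul R (ExtModule R C M i) r :=
  LinearMap.ext fun e ↦ (Ext.smul_eq_comp_mk₀ e r).symm

variable {f : M₁ →ₗ[R] M₂} {g : M₂ →ₗ[R] M₃}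

lemma shortExact (hf : Function.Injective f) (hfg : Function.Exact f g)
    (hg : Function.Surjective g) :
    (ModuleCat.shortComplexOfCompEqZero f g hfg.linearMap_comp_eq_zero).ShortExact :=
  ModuleCat.shortComplex_shortExact _ hfg hf hg

/-- The connecting homomorphism `Ext^i_R(C, M₃) → Ext^(i+1)_R(C, M₁)`. -/
noncomputable def connecting (hf : Function.Injective f) (hfg : Function.Exact f g)
    (hg : Function.Surjective g) (i : ℕ) : ExtModule R C M₃ i →ₗ[R] ExtModule R C M₁ (i + 1) :=
  (shortExact hf hfg hg).extClass.postcompOfLinear R _ rfl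

lemma exact_map_map (hf : Function.Injective f) (hfg : Function.Exact f g)
    (hg : Function.Surjective g) (i : ℕ) : Function.Exact (map C f i) (map C g i) :=
  (ShortComplex.ab_exact_iff_function_exact _).1
    (Ext.covariant_sequence_exact₂' _ (shortExact hf hfg hg) i)

lemma exact_map_connecting (hf : Function.Injective f) (hfg : Function.Exact f g)
    (hg : Function.Surjective g) (i : ℕ) :
    Function.Exact (map C g i) (connecting C hf hfg hg i) :=
  (ShortComplex.ab_exact_iff_function_exact _).1
    (Ext.covariant_sequence_exact₃' _ (shortExact hf hfg hg) i (i + 1) rfl)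

lemma exact_connecting_map (hf : Function.Injective f) (hfg : Function.Exact f g)
    (hg : Function.Surjective g) (i : ℕ) :
    Function.Exact (connecting C hf hfg hg i) (map C f (i + 1)) :=
  (ShortComplex.ab_exact_iff_function_exact _).1
    (Ext.covariant_sequence_exact₁' _ (shortExact hf hfg hg) i (i + 1) rfl)

lemma map_zero_injective (hf : Function.Injective f) : Function.Injective (map C f 0) :=
  have : Mono (ModuleCat.ofHom f) := (ModuleCat.mono_iff_injective _).2 hf
  Ext.postcomp_mk₀_injective_of_mono _ _

lemma smul_eq_zero {r : R} (hr : r ∈ Module.annihilator R C) {i : ℕ} (e : ExtModule R C M i) :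
    r • e = 0 := by
  have hC : r • 𝟙 (ModuleCat.of R C) = 0 := by
    ext c
    exact Module.mem_annihilator.1 hr c
  rw [← Ext.mk₀_id_comp (r • e), Ext.comp_smul, ← Ext.smul_comp, ← Ext.mk₀_smul, hC,
    Ext.mk₀_zero, Ext.zero_comp]

end ExtModule

end Ext

section ExtSerre

variable {R : Type u} [CommRing R] (T : ObjectProperty (ModuleCat.{u} R)) [T.IsSerreClass]
  (C : Type u) [AddCommGroup C] [Module R C]
  {M M₁ M₂ M₃ : Type u} [AddCommGroup M] [Module R M] [AddCommGroup M₁] [Module R M₁]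
  [AddCommGroup M₂] [Module R M₂] [AddCommGroup M₃] [Module R M₃]

open Abelian

lemma prop_pi_fin (h : T (ModuleCat.of R M)) (k : ℕ) : T (ModuleCat.of R (Fin k → M)) := by
  induction k with
  | zero => exact prop_of_subsingleton T
  | succ k ih =>
    have hex : Function.Exact (LinearMap.inl R M (Fin k → M)) (LinearMap.snd R M (Fin k → M)) :=
      .inl_snd
    exact prop_of_surjective T (Fin.consLinearEquiv R fun _ ↦ M).surjective
      (prop_of_exact T hex h ih)

/-- Dimension shifting in `C`, starting from `Hom_R(C, M) ⊆ M ^ k`. -/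
lemma prop_extModule [IsNoetherianRing R] [Module.Finite R C] (h : T (ModuleCat.of R M)) (i : ℕ) :
    T (ModuleCat.of R (ExtModule R C M i)) := by
  induction i generalizing C with
  | zero =>
    obtain ⟨k, p, hp⟩ := Module.Finite.exists_fin' R C
    have hinj : Function.Injective (LinearMap.lcomp R M p) :=
      LinearMap.lcomp_injective_of_surjective p hp
    let e : ExtModule R C M 0 ≃ₗ[R] (C →ₗ[R] M) := Ext.linearEquiv₀.trans ModuleCat.homLinearEquiv
    let e' : ((Fin k → R) →ₗ[R] M) ≃ₗ[R] (Fin k → M) := (Pi.basisFun R (Fin k)).constr R |>.symm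
    exact prop_of_injective T (f := e'.toLinearMap ∘ₗ LinearMap.lcomp R M p ∘ₗ e.toLinearMap)
      (e'.injective.comp (hinj.comp e.injective)) (prop_pi_fin T h k)
  | succ i ih =>
    obtain ⟨P, _, _, _, _, p, hp⟩ := Module.exists_finite_presentation R C
    have hpk := LinearMap.shortExact_shortComplexKer hp
    exact prop_of_surjective T
      (f := hpk.extClass.precompOfLinear R (ModuleCat.of R M) (add_comm 1 i))
      (precomp_extClass_surjective_of_projective_X₂ _ hpk i) (ih (LinearMap.ker p))

/-- `Hom_R(R/a, M)` is the submodule `(0 :_M a)`. -/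
noncomputable def extModuleZeroEquiv (a : Ideal R) :
    ExtModule R (R ⧸ a) M 0 ≃ₗ[R] Submodule.torsionBySet R M a :=
  (Ext.linearEquiv₀.trans ModuleCat.homLinearEquiv).trans <|
    { toFun := fun f ↦ ⟨f 1, (Submodule.mem_torsionBySet_iff _ _).2 fun r ↦ by
        rw [← map_smul, Algebra.smul_def, mul_one, Ideal.Quotient.algebraMap_eq,
          Ideal.Quotient.eq_zero_iff_mem.2 r.2, map_zero]⟩
      map_add' := fun _ _ ↦ rfl
      map_smul' := fun _ _ ↦ rfl
      invFun := fun m ↦ a.liftQ (LinearMap.toSpanSingleton R M m) fun r hr ↦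
        (Submodule.mem_torsionBySet_iff _ _).1 m.2 ⟨r, hr⟩
      left_inv := fun f ↦ Submodule.linearMap_qext _ (LinearMap.ext_ring (one_smul R _))
      right_inv := fun m ↦ Subtype.ext (one_smul R _) }

lemma prop_extModule_zero_iff {a : Ideal R} : T (ModuleCat.of R (ExtModule R (R ⧸ a) M 0)) ↔
    T (ModuleCat.of R (Submodule.torsionBySet R M a)) :=
  ⟨prop_of_surjective T (extModuleZeroEquiv a).surjective,
    prop_of_injective T (extModuleZeroEquiv a).injective⟩

lemma isoModSerre_of_exact {M₀ : Type u} [AddCommGroup M₀] [Module R M₀] {f : M₀ →ₗ[R] M₁}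
    {φ : M₁ →ₗ[R] M₂} {g : M₂ →ₗ[R] M₃} (hf : Function.Exact f φ) (hg : Function.Exact φ g)
    (h₀ : T (ModuleCat.of R M₀)) (h₃ : T (ModuleCat.of R M₃)) :
    T.isoModSerre (ModuleCat.ofHom φ) := by
  rw [isoModSerre_ofHom_iff, hf.linearMap_ker_eq, ← hg.linearMap_ker_eq]
  exact ⟨prop_of_surjective T f.surjective_rangeRestrict h₀,
    prop_of_injective T (LinearMap.ker_eq_bot.1 (Submodule.ker_liftQ_eq_bot _ _ le_rfl le_rfl)) h₃⟩

section ShortExact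

variable {T C} {f : M₁ →ₗ[R] M₂} {g : M₂ →ₗ[R] M₃} (hf : Function.Injective f)
  (hfg : Function.Exact f g) (hg : Function.Surjective g)

include hf hfg hg

lemma isoModSerre_map_of_injective (h₃ : ∀ i, T (ModuleCat.of R (ExtModule R C M₃ i))) (i : ℕ) :
    T.isoModSerre (ModuleCat.ofHom (ExtModule.map C f i)) := by
  cases i with
  | zero =>
    exact isoModSerre_of_exact T
      ((LinearMap.exact_zero_iff_injective PUnit.{u + 1} _).2 (ExtModule.map_zero_injective C hf))
      (ExtModule.exact_map_map C hf hfg hg 0) (prop_of_subsingleton T) (h₃ 0)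
  | succ i =>
    exact isoModSerre_of_exact T (ExtModule.exact_connecting_map C hf hfg hg i)
      (ExtModule.exact_map_map C hf hfg hg (i + 1)) (h₃ i) (h₃ (i + 1))

lemma isoModSerre_map_of_surjective (h₁ : ∀ i, T (ModuleCat.of R (ExtModule R C M₁ i))) (i : ℕ) :
    T.isoModSerre (ModuleCat.ofHom (ExtModule.map C g i)) :=
  isoModSerre_of_exact T (ExtModule.exact_map_map C hf hfg hg i)
    (ExtModule.exact_map_connecting C hf hfg hg i) (h₁ i) (h₁ (i + 1))

end ShortExact

lemma isoModSerre_map {φ : M₁ →ₗ[R] M₂}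
    (hker : ∀ i, T (ModuleCat.of R (ExtModule R C (LinearMap.ker φ) i)))
    (hcoker : ∀ i, T (ModuleCat.of R (ExtModule R C (M₂ ⧸ LinearMap.range φ) i))) (i : ℕ) :
    T.isoModSerre (ModuleCat.ofHom (ExtModule.map C φ i)) := by
  have hepi := isoModSerre_map_of_surjective (LinearMap.ker φ).injective_subtype
    (φ.ker_rangeRestrict ▸ LinearMap.exact_subtype_ker_map φ.rangeRestrict)
    φ.surjective_rangeRestrict hker i
  have hmono := isoModSerre_map_of_injective (LinearMap.range φ).injective_subtype
    (LinearMap.exact_subtype_mkQ _) (Submodule.mkQ_surjective _) hcoker i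
  have := T.isoModSerre.comp_mem _ _ hepi hmono
  rwa [← ModuleCat.ofHom_comp, ← ExtModule.map_comp] at this

/-- Melkersson's criterion: multiplication by `x` on `Ext^i_R(C, M)` vanishes, and it is an
isomorphism modulo `T`. -/
lemma prop_extModule_of_ker_of_coker {x : R} (hx : x ∈ Module.annihilator R C)
    (hker : ∀ i, T (ModuleCat.of R (ExtModule R C (LinearMap.ker (LinearMap.lsmul R M x)) i)))
    (hcoker : ∀ i,
      T (ModuleCat.of R (ExtModule R C (M ⧸ LinearMap.range (LinearMap.lsmul R M x)) i)))
    (i : ℕ) : T (ModuleCat.of R (ExtModule R C M i)) := by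
  have h := isoModSerre_map T C hker hcoker i
  have h0 : ExtModule.map C (LinearMap.lsmul R M x) i = 0 := by
    rw [ExtModule.map_lsmul]
    exact LinearMap.ext fun e ↦ ExtModule.smul_eq_zero C hx e
  rw [h0] at h
  exact ((T.isoModSerre_zero_iff _ _).1 h).1

section LowDegree

variable {T C} {t : ℕ} {φ : M →ₗ[R] M}

lemma prop_extModule_ker (ht : t ≤ 1) (h : ∀ i ≤ t, T (ModuleCat.of R (ExtModule R C M i))) :
    ∀ i ≤ t, T (ModuleCat.of R (ExtModule R C (LinearMap.ker φ) i)) := by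
  intro i hi
  match i with
  | 0 =>
    exact prop_of_injective T (ExtModule.map_zero_injective C (LinearMap.ker φ).injective_subtype)
      (h 0 hi)
  | 1 =>
    have hrange : T (ModuleCat.of R (ExtModule R C (LinearMap.range φ) 0)) :=
      prop_of_injective T
        (ExtModule.map_zero_injective C (LinearMap.range φ).injective_subtype) (h 0 (by lia))
    exact prop_of_exact T (ExtModule.exact_connecting_map C (LinearMap.ker φ).injective_subtype
      (φ.ker_rangeRestrict ▸ LinearMap.exact_subtype_ker_map φ.rangeRestrict)
      φ.surjective_rangeRestrict 0) hrange (h 1 hi)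
  | _ + 2 => lia

variable (hker : ∀ i, T (ModuleCat.of R (ExtModule R C (LinearMap.ker φ) i)))
  (h : ∀ i ≤ t, T (ModuleCat.of R (ExtModule R C M i)))

include hker h

lemma prop_extModule_range :
    ∀ i ≤ t, T (ModuleCat.of R (ExtModule R C (LinearMap.range φ) i)) := fun i hi ↦
  prop_of_exact T (ExtModule.exact_map_connecting C (LinearMap.ker φ).injective_subtype
    (φ.ker_rangeRestrict ▸ LinearMap.exact_subtype_ker_map φ.rangeRestrict)
    φ.surjective_rangeRestrict i) (h i hi) (hker (i + 1))

lemma prop_extModule_coker :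
    ∀ i < t, T (ModuleCat.of R (ExtModule R C (M ⧸ LinearMap.range φ) i)) := fun i hi ↦
  prop_of_exact T (ExtModule.exact_map_connecting C (LinearMap.range φ).injective_subtype
    (LinearMap.exact_subtype_mkQ _) (Submodule.mkQ_surjective _) i) (h i hi.le)
    (prop_extModule_range hker h (i + 1) hi)

end LowDegree

end ExtSerre

section Descent

variable {R : Type u} [CommRing R] (T : ObjectProperty (ModuleCat.{u} R)) [T.IsSerreClass]
  {M : Type u} [AddCommGroup M] [Module R M]

lemma prop_torsionBySet_of_injective {N : Type u} [AddCommGroup N] [Module R N] {f : N →ₗ[R] M}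
    (hf : Function.Injective f) (s : Set R)
    (h : T (ModuleCat.of R (Submodule.torsionBySet R M s))) :
    T (ModuleCat.of R (Submodule.torsionBySet R N s)) := by
  have hs : ∀ m ∈ Submodule.torsionBySet R N s, f m ∈ Submodule.torsionBySet R M s := by
    intro m hm
    rw [Submodule.mem_torsionBySet_iff] at hm ⊢
    intro r
    rw [← map_smul, hm r, map_zero]
  exact prop_of_injective T (f := f.restrict hs)
    (fun x y h ↦ Subtype.ext (hf (congrArg Subtype.val h))) h

/-- `M / (0 :_M a)` embeds into a finite power of `aM` by the generators of `a`. -/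
lemma prop_of_pow_le_annihilator {a : Ideal R} (ha : a.FG) (n : ℕ)
    (hM : a ^ n ≤ Module.annihilator R M)
    (hsoc : T (ModuleCat.of R (Submodule.torsionBySet R M a))) : T (ModuleCat.of R M) := by
  induction n generalizing M with
  | zero =>
    have : Subsingleton M := Module.annihilator_eq_top_iff.1 (top_le_iff.1 (by simpa using hM))
    exact prop_of_subsingleton T
  | succ n ih =>
    obtain ⟨k, r, hr⟩ := Submodule.fg_iff_exists_fin_generating_family.1 ha
    let aM : Submodule R M := a • ⊤
    have haM : T (ModuleCat.of R aM) := by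
      refine ih (Submodule.le_annihilator_iff.2 ?_)
        (prop_torsionBySet_of_injective T aM.injective_subtype a hsoc)
      rw [← Submodule.mul_smul, ← pow_succ]
      exact Submodule.le_annihilator_iff.1 (Submodule.annihilator_top (R := R) (M := M) ▸ hM)
    let φ : M →ₗ[R] Fin k → aM := LinearMap.pi fun i ↦
      (LinearMap.lsmul R M (r i)).codRestrict aM fun m ↦
        Submodule.smul_mem_smul (hr ▸ Submodule.subset_span ⟨i, rfl⟩) trivial
    have hφ : LinearMap.ker φ ≤ Submodule.torsionBySet R M a := fun m hm ↦ by
      rw [← hr, ← Submodule.torsionBySet_eq_torsionBySet_span, Submodule.mem_torsionBySet_iff]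
      rintro ⟨_, i, rfl⟩
      exact congrArg Subtype.val (congrFun hm i)
    exact prop_of_exact T φ.exact_subtype_ker_map
      (prop_of_injective T (Submodule.inclusion_injective hφ) hsoc) (prop_pi_fin T haM k)

section Induction

variable {T} {a : Ideal R} {t : ℕ} {x : R}

lemma prop_extModule_of_ker_of_range_pow (ht : t ≤ 1) (hx : x ∈ a) (k : ℕ) {N : Submodule R M}
    (hN : N = LinearMap.range (LinearMap.lsmul R M (x ^ k)))
    (hker : let K := LinearMap.ker (LinearMap.lsmul R M (x ^ k))
      (∀ i ≤ t, T (ModuleCat.of R (ExtModule R (R ⧸ a) K i))) →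
        ∀ i, T (ModuleCat.of R (ExtModule R (R ⧸ a) K i)))
    (hker' : let K := LinearMap.ker (LinearMap.lsmul R N x)
      (∀ i ≤ t, T (ModuleCat.of R (ExtModule R (R ⧸ a) K i))) →
        ∀ i, T (ModuleCat.of R (ExtModule R (R ⧸ a) K i)))
    (hcoker : let X := N ⧸ LinearMap.range (LinearMap.lsmul R N x)
      (∀ i < t, T (ModuleCat.of R (ExtModule R (R ⧸ a) X i))) →
        ∀ i, T (ModuleCat.of R (ExtModule R (R ⧸ a) X i)))
    (h : ∀ i ≤ t, T (ModuleCat.of R (ExtModule R (R ⧸ a) M i))) (i : ℕ) :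
    T (ModuleCat.of R (ExtModule R (R ⧸ a) M i)) := by
  subst hN
  have hK := hker (prop_extModule_ker ht h)
  have hNt := prop_extModule_range hK h
  have hK' := hker' (prop_extModule_ker ht hNt)
  have hx' : x ∈ Module.annihilator R (R ⧸ a) := by rwa [Ideal.annihilator_quotient]
  have hN := prop_extModule_of_ker_of_coker T _ hx' hK' (hcoker (prop_extModule_coker hK' hNt))
  set φ := LinearMap.lsmul R M (x ^ k)
  exact prop_of_exact T (ExtModule.exact_map_map _ (LinearMap.ker φ).injective_subtype
    (φ.ker_rangeRestrict ▸ LinearMap.exact_subtype_ker_map φ.rangeRestrict)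
    φ.surjective_rangeRestrict i) (hK i) (hN i)

lemma sup_span_le_radical_annihilator_ker {b : Ideal R} (hb : b ≤ (Module.annihilator R M).radical)
    {N : Type u} [AddCommGroup N] [Module R N] {f : N →ₗ[R] M} (hf : Function.Injective f) (k : ℕ) :
    b ⊔ Ideal.span {x} ≤
      (Module.annihilator R (LinearMap.ker (LinearMap.lsmul R N (x ^ k)))).radical := by
  have hinj := hf.comp (LinearMap.ker (LinearMap.lsmul R N (x ^ k))).injective_subtype
  refine sup_le (hb.trans (Ideal.radical_mono
    (LinearMap.annihilator_le_of_injective (f ∘ₗ Submodule.subtype _) hinj))) ?_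
  rw [Ideal.span_singleton_le_iff_mem]
  exact ⟨k, Module.mem_annihilator.2 fun m ↦ Subtype.ext m.2⟩

/-- Noetherian induction on an ideal `b` acting nilpotently on `M`: given `x ∈ a` outside of `b`,
the ideal `b + (x)` acts nilpotently on the kernels of multiplication by `x`, which leaves only the
cokernel of `x` on some `x ^ k M`. -/
lemma prop_extModule_of_le [IsNoetherianRing R] (Q : ObjectProperty (ModuleCat.{u} R))
    [Q.IsSerreClass] (ht : t ≤ 1)
    (hQ : ∀ (M : Type u) [AddCommGroup M] [Module R M], Q (ModuleCat.of R M) → ∀ x ∈ a, ∃ k : ℕ,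
      let N := LinearMap.range (LinearMap.lsmul R M (x ^ k))
      let X := N ⧸ LinearMap.range (LinearMap.lsmul R N x)
      (∀ i < t, T (ModuleCat.of R (ExtModule R (R ⧸ a) X i))) →
        ∀ i, T (ModuleCat.of R (ExtModule R (R ⧸ a) X i)))
    (hM : Q (ModuleCat.of R M)) (h : ∀ i ≤ t, T (ModuleCat.of R (ExtModule R (R ⧸ a) M i)))
    (i : ℕ) : T (ModuleCat.of R (ExtModule R (R ⧸ a) M i)) := by
  suffices H : ∀ b : Ideal R, ∀ (M : Type u) [AddCommGroup M] [Module R M],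
      b ≤ (Module.annihilator R M).radical → Q (ModuleCat.of R M) →
      (∀ i ≤ t, T (ModuleCat.of R (ExtModule R (R ⧸ a) M i))) →
      ∀ i, T (ModuleCat.of R (ExtModule R (R ⧸ a) M i)) from H ⊥ M bot_le hM h i
  intro b
  induction b using IsNoetherian.induction with
  | hgt b ih =>
  intro M _ _ hb hM h
  by_cases hab : a ≤ b
  · obtain ⟨n, hn⟩ := Ideal.exists_pow_le_of_le_radical_of_fg (hab.trans hb)
      (IsNoetherian.noetherian a)
    exact prop_extModule T _ (prop_of_pow_le_annihilator T (IsNoetherian.noetherian a) n hn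
      ((prop_extModule_zero_iff T).1 (h 0 (Nat.zero_le t))))
  · obtain ⟨x, hxa, hxb⟩ := SetLike.not_le_iff_exists.1 hab
    have hlt : b < b ⊔ Ideal.span {x} := left_lt_sup.2
      fun hx ↦ hxb ((Ideal.span_singleton_le_iff_mem b).1 hx)
    have hsub (N : Submodule R M) : Q (ModuleCat.of R N) :=
      prop_of_injective Q N.injective_subtype hM
    obtain ⟨k, hk⟩ := hQ M hM x hxa
    refine prop_extModule_of_ker_of_range_pow ht hxa k rfl
      (ih _ hlt _ (sup_span_le_radical_annihilator_ker hb (f := .id) Function.injective_id k)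
        (hsub _)) ?_ hk h
    have hK := sup_span_le_radical_annihilator_ker (x := x) hb
      (LinearMap.range (LinearMap.lsmul R M (x ^ k))).injective_subtype 1
    rw [pow_one] at hK
    exact ih _ hlt _ hK (prop_of_injective Q (Submodule.injective_subtype _) (hsub _))

end Induction

end Descent

section Support

variable {R : Type*} [CommRing R] {M : Type*} [AddCommGroup M] [Module R M]

lemma support_subset_zeroLocus_iff {s : Set R} :
    Module.support R M ⊆ PrimeSpectrum.zeroLocus s ↔ ∀ x ∈ s, ∀ m : M, ∃ n : ℕ, x ^ n • m = 0 := by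
  have hx (x : R) : Module.support R M ⊆ PrimeSpectrum.zeroLocus {x} ↔
      ∀ m : M, ∃ n : ℕ, x ^ n • m = 0 := by
    rw [← LocalizedModule.subsingleton_iff_support_subset, LocalizedModule.subsingleton_iff]
    exact forall_congr' fun m ↦ by simp [Submonoid.mem_powers_iff]
  simp only [← hx, PrimeSpectrum.subset_zeroLocus_iff_subset_vanishingIdeal,
    Set.subset_def (s := s), Set.singleton_subset_iff]

end Support

section Artinian

variable {R : Type u} [CommRing R] {M : Type u} [AddCommGroup M] [Module R M]

variable (R) in
/-- The Serre class of Artinian modules, to which `prop_of_pow_le_annihilator` is applied. -/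
def artinianModules : ObjectProperty (ModuleCat.{u} R) := fun M ↦ IsArtinian R M

instance : (artinianModules R).IsSerreClass :=
  isSerreClass_of_exact (inferInstanceAs (IsArtinian R PUnit.{u + 1}))
    fun _ _ _ _ _ _ _ _ _ f g h (_ : IsArtinian R _) (_ : IsArtinian R _) ↦
      isArtinian_of_range_eq_ker f g h.linearMap_ker_eq.symm

lemma exists_forall_inf_le_of_antitone {N : ℕ → Submodule R M} (hN : Antitone N)
    (K : Submodule R M) [IsArtinian R K] : ∃ n, ∀ m ≥ n, N n ⊓ K ≤ N m := by
  obtain ⟨n, hn⟩ := IsArtinian.monotone_stabilizes (R := R) (M := K)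
    ⟨fun n ↦ OrderDual.toDual ((N n).comap K.subtype), fun i j h ↦ Submodule.comap_mono (hN h)⟩
  refine ⟨n, fun m hm v hv ↦ ?_⟩
  have hmem : (⟨v, hv.2⟩ : K) ∈ (N n).comap K.subtype := hv.1
  exact (OrderDual.toDual_inj.1 (hn m hm)).le hmem

lemma le_of_inf_torsionBy_pow_le {x : R} (hx : ∀ m : M, ∃ n : ℕ, x ^ n • m = 0)
    {N N' : Submodule R M} (s : ℕ) (hs : N' ⊓ Submodule.torsionBy R M (x ^ s) ≤ N)
    (hle : N ≤ N') (hpow : ∀ n ≥ s, N'.map (LinearMap.lsmul R M (x ^ n)) ⊓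
      Submodule.torsionBy R M x ≤ N.map (LinearMap.lsmul R M (x ^ n))) : N' ≤ N := by
  suffices H : ∀ n ≥ s, N' ⊓ Submodule.torsionBy R M (x ^ n) ≤ N by
    intro m hm
    obtain ⟨n, hn⟩ := hx m
    refine H (s + n) (Nat.le_add_right s n) ⟨hm, ?_⟩
    rw [SetLike.mem_coe, Submodule.mem_torsionBy_iff, pow_add, mul_smul, hn, smul_zero]
  intro n hn
  induction n, hn using Nat.le_induction with
  | base => exact hs
  | succ n hn ih =>
    rintro m ⟨hm, hxm⟩
    rw [SetLike.mem_coe, Submodule.mem_torsionBy_iff, pow_succ', mul_smul] at hxm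
    obtain ⟨m', hm', h⟩ := hpow n hn ⟨Submodule.mem_map_of_mem hm, hxm⟩
    have hsub : m - m' ∈ N := ih ⟨N'.sub_mem hm (hle hm'), by
      rw [SetLike.mem_coe, Submodule.mem_torsionBy_iff, smul_sub, sub_eq_zero]
      exact h.symm⟩
    simpa using N.add_mem hsub hm'

lemma map_lsmul_pow_le {x : R} {i j : ℕ} (h : i ≤ j) {N N' : Submodule R M} (hN : N ≤ N') :
    N.map (LinearMap.lsmul R M (x ^ j)) ≤ N'.map (LinearMap.lsmul R M (x ^ i)) := by
  rintro _ ⟨m, hm, rfl⟩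
  refine ⟨x ^ (j - i) • m, Submodule.smul_mem _ _ (hN hm), ?_⟩
  simp only [LinearMap.lsmul_apply, ← mul_smul, ← pow_add, Nat.add_sub_cancel' h]

instance isArtinian_torsionBy_pow {x : R} [IsArtinian R (Submodule.torsionBy R M x)] (n : ℕ) :
    IsArtinian R (Submodule.torsionBy R M (x ^ n)) := by
  refine prop_of_pow_le_annihilator (artinianModules R) (Submodule.fg_span_singleton x) n ?_ ?_
  · rw [Ideal.submodule_span_eq, Ideal.span_singleton_pow, Ideal.span_singleton_le_iff_mem]
    exact Module.mem_annihilator.2 fun m ↦ Subtype.ext m.2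
  · refine prop_torsionBySet_of_injective (artinianModules R) (Submodule.injective_subtype _) _ ?_
    rw [Submodule.torsionBySet_span_singleton_eq]
    exact ‹IsArtinian R (Submodule.torsionBy R M x)›

/-- A descending chain `N j` is compared through the chain `x ^ j N j ∩ (0 :_M x)`. -/
lemma isArtinian_of_torsionBy {x : R} (hx : ∀ m : M, ∃ n : ℕ, x ^ n • m = 0)
    [IsArtinian R (Submodule.torsionBy R M x)] : IsArtinian R M := by
  rw [← monotone_stabilizes_iff_artinian]
  intro N
  have hN : Antitone fun j ↦ OrderDual.ofDual (N j) := fun i j h ↦ N.monotone h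
  obtain ⟨n, hn⟩ := exists_forall_inf_le_of_antitone
    (N := fun j ↦ (OrderDual.ofDual (N j)).map (LinearMap.lsmul R M (x ^ j)))
    (fun i j h ↦ map_lsmul_pow_le h (hN h)) (Submodule.torsionBy R M x)
  obtain ⟨k, hk⟩ := exists_forall_inf_le_of_antitone hN (Submodule.torsionBy R M (x ^ n))
  refine ⟨max n k, fun m hm ↦ le_antisymm (N.monotone hm) ?_⟩
  refine le_of_inf_torsionBy_pow_le hx n (N := OrderDual.ofDual (N m)) ?_ (hN hm) fun j hj ↦ ?_
  · exact (inf_le_inf_right _ (hN (le_max_right _ _))).trans (hk m (le_of_max_le_right hm))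
  · calc _ ≤ _ := inf_le_inf_right _ (map_lsmul_pow_le hj (hN (le_max_left n k)))
      _ ≤ _ := hn (max j m) (hj.trans (le_max_left j m))
      _ ≤ _ := map_lsmul_pow_le (le_max_left j m) (hN (le_max_right j m))

lemma isArtinian_of_torsionBySet {s : Set R} (hs : s.Finite)
    (hM : ∀ x ∈ s, ∀ m : M, ∃ n : ℕ, x ^ n • m = 0)
    (h : IsArtinian R (Submodule.torsionBySet R M s)) : IsArtinian R M := by
  induction s, hs using Set.Finite.induction_on with
  | empty =>
    have htop : Submodule.torsionBySet R M ∅ = ⊤ := by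
      ext m
      simp [Submodule.mem_torsionBySet_iff]
    rw [htop] at h
    exact Submodule.topEquiv.isArtinian_iff.1 h
  | @insert x s _ _ ih =>
    refine ih (fun y hy ↦ hM y (Set.mem_insert_of_mem x hy)) ?_
    let f := Submodule.torsionBy R (Submodule.torsionBySet R M s) x |>.subtype
    have hf (m) : Submodule.subtype _ (f m) ∈ Submodule.torsionBySet R M (insert x s) := by
      rw [Submodule.mem_torsionBySet_iff]
      rintro ⟨y, rfl | hy⟩
      · exact congrArg Subtype.val m.2
      · exact (Submodule.mem_torsionBySet_iff _ _).1 m.1.2 ⟨y, hy⟩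
    have := isArtinian_of_injective ((Submodule.subtype _ ∘ₗ f).codRestrict _ hf)
      ((Subtype.val_injective.comp Subtype.val_injective).codRestrict hf)
    refine isArtinian_of_torsionBy (x := x) fun m ↦ ?_
    obtain ⟨n, hn⟩ := hM x (Set.mem_insert x s) m
    exact ⟨n, Subtype.ext hn⟩

lemma isArtinian_of_support_subset_zeroLocus {a : Ideal R} (ha : a.FG)
    (hM : Module.support R M ⊆ PrimeSpectrum.zeroLocus a)
    (h : IsArtinian R (Submodule.torsionBySet R M a)) : IsArtinian R M := by
  obtain ⟨s, hs, rfl⟩ := Submodule.fg_def.1 ha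
  rw [← Submodule.torsionBySet_eq_torsionBySet_span] at h
  exact isArtinian_of_torsionBySet hs
    (fun x hx ↦ support_subset_zeroLocus_iff.1 hM x (Submodule.subset_span hx)) h

end Artinian

section Classes

variable {R : Type u} [CommRing R] {M : Type u} [AddCommGroup M] [Module R M]

/-- The Serre class of modules with support in `Z`, for an arbitrary set of primes `Z`. -/
def modulesSupportedIn (Z : Set (PrimeSpectrum R)) : ObjectProperty (ModuleCat.{u} R) :=
  fun M ↦ Module.support R M ⊆ Z

instance (Z : Set (PrimeSpectrum R)) : (modulesSupportedIn Z).IsSerreClass := by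
  refine isSerreClass_of_exact (by simp [modulesSupportedIn, Module.support_eq_empty]) ?_
  intro M₁ M₂ M₃ _ _ _ _ _ _ f g h h₁ h₃ p hp
  by_contra hpZ
  refine absurd hp (Module.notMem_support_iff'.2 fun m ↦ ?_)
  obtain ⟨r, hr, hrm⟩ := Module.notMem_support_iff'.1 (fun hp ↦ hpZ (h₃ hp)) (g m)
  obtain ⟨n, hn⟩ := (h (r • m)).1 (by rw [map_smul, hrm])
  obtain ⟨s, hs, hsn⟩ := Module.notMem_support_iff'.1 (fun hp ↦ hpZ (h₁ hp)) n
  exact ⟨s * r, p.2.mul_notMem hs hr, by rw [mul_smul, ← hn, ← map_smul, hsn, map_zero]⟩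

/-- The Serre class of modules `M` such that `S⁻¹M` is an Artinian `S⁻¹R`-module. -/
def modulesArtinianAt (S : Submonoid R) : ObjectProperty (ModuleCat.{u} R) :=
  fun M ↦ IsArtinian (Localization S) (LocalizedModule S M)

instance (S : Submonoid R) : (modulesArtinianAt S).IsSerreClass :=
  isSerreClass_of_exact
    (inferInstanceAs (IsArtinian (Localization S) (LocalizedModule S PUnit.{u + 1})))
    fun _ _ _ _ _ _ _ _ _ f g h (_ : IsArtinian _ _) (_ : IsArtinian _ _) ↦
      isArtinian_of_range_eq_ker (LocalizedModule.map S f) (LocalizedModule.map S g)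
        (((LinearMap.exact_iff (f := LocalizedModule.map S f) (g := LocalizedModule.map S g)).1
          (LocalizedModule.map_exact S f g h)).symm)

variable (R M) in
lemma support_torsionBySet {a : Ideal R} (ha : a.FG)
    (hM : Module.support R M ⊆ PrimeSpectrum.zeroLocus a) :
    Module.support R (Submodule.torsionBySet R M a) = Module.support R M := by
  set T := Submodule.torsionBySet R M a
  refine (Module.support_subset_of_injective T.subtype T.injective_subtype).antisymm fun p hp ↦ ?_
  obtain ⟨m, hm⟩ := Module.mem_support_iff_exists_annihilator.1 hp
  have hinj := (Submodule.span R {m}).injective_subtype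
  have hsupp : Module.support R (Submodule.span R {m}) ⊆ PrimeSpectrum.zeroLocus a :=
    (Module.support_subset_of_injective _ hinj).trans hM
  rw [Module.support_eq_zeroLocus, PrimeSpectrum.zeroLocus_subset_zeroLocus_iff] at hsupp
  obtain ⟨n, hn⟩ := Ideal.exists_pow_le_of_le_radical_of_fg hsupp ha
  refine prop_of_pow_le_annihilator (modulesSupportedIn (Module.support R T)) ha n hn
    (prop_torsionBySet_of_injective _ hinj a (le_refl (Module.support R T))) ?_
  rwa [Module.support_eq_zeroLocus, PrimeSpectrum.mem_zeroLocus, SetLike.coe_subset_coe]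

end Classes

section ArtinianLocalization

lemma isArtinian_of_support_subset_closedPoints {R : Type*} [CommRing R] [IsNoetherianRing R]
    {M : Type*} [AddCommGroup M] [Module R M] [Module.Finite R M]
    (h : ∀ p ∈ Module.support R M, p.asIdeal.IsMaximal) : IsArtinian R M := by
  induction ‹Module.Finite R M› using
    IsNoetherianRing.induction_on_isQuotientEquivQuotientPrime R with
  | subsingleton N => infer_instance
  | quotient N p e =>
    have hp : p ∈ Module.support R N := by
      rw [e.support_eq, Module.support_eq_zeroLocus, Ideal.annihilator_quotient]
      exact Set.Subset.rfl
    have : IsSimpleModule R (R ⧸ p.asIdeal) := isSimpleModule_iff_isCoatom.2 (h p hp).out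
    exact e.isArtinian_iff.2 inferInstance
  | exact N₁ N₂ N₃ f g hf hg hfg h₁ h₃ =>
    have := h₁ fun p hp ↦ h p (Module.support_subset_of_injective f hf hp)
    have := h₃ fun p hp ↦ h p (Module.support_subset_of_surjective g hg hp)
    exact isArtinian_of_range_eq_ker f g hfg.linearMap_ker_eq.symm

variable {R : Type u} [CommRing R] {M : Type u} [AddCommGroup M] [Module R M] {S : Submonoid R}

lemma torsionBySet_map_le_range_map_subtype {a : Ideal R} (ha : a.FG) :
    Submodule.torsionBySet (Localization S) (LocalizedModule S M)
      (a.map (algebraMap R (Localization S))) ≤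
      LinearMap.range (LocalizedModule.map S (Submodule.torsionBySet R M a).subtype) := by
  intro m' hm'
  induction m' with | h m s =>
  have ham : LocalizedModule.mkLinearMap S M ∘ₗ
      (LinearMap.toSpanSingleton R M m).domRestrict a = 0 := by
    ext r
    have hrm := (Submodule.mem_torsionBySet_iff _ _).1 hm' ⟨_, Ideal.mem_map_of_mem _ r.2⟩
    rw [algebraMap_smul] at hrm
    calc LocalizedModule.mk ((r : R) • m) 1 = (s : R) • (r : R) • LocalizedModule.mk m s := by
          rw [LocalizedModule.smul'_mk, LocalizedModule.smul'_mk]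
          exact (LocalizedModule.mk_cancel s _).symm
      _ = 0 := by rw [hrm, smul_zero]
  have : Module.Finite R a := Module.Finite.iff_fg.2 ha
  obtain ⟨t, ht⟩ := Module.Finite.exists_smul_of_comp_eq_of_isLocalizedModule S
    (LocalizedModule.mkLinearMap S M) _ 0 (ham.trans (LinearMap.comp_zero _).symm)
  have htm : t • m ∈ Submodule.torsionBySet R M a := by
    rw [Submodule.mem_torsionBySet_iff]
    intro r
    rw [smul_comm]
    simpa using congr($ht r)
  refine ⟨LocalizedModule.mk ⟨_, htm⟩ (t * s), ?_⟩
  rw [LocalizedModule.map_mk]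
  exact LocalizedModule.mk_cancel_common_left t s m

lemma isArtinian_localizedModule {a : Ideal R} (ha : a.FG)
    (hM : Module.support R M ⊆ PrimeSpectrum.zeroLocus a)
    (h : modulesArtinianAt S (ModuleCat.of R (Submodule.torsionBySet R M a))) :
    modulesArtinianAt S (ModuleCat.of R M) := by
  have : IsArtinian (Localization S) (LocalizedModule S (Submodule.torsionBySet R M a)) := h
  refine isArtinian_of_support_subset_zeroLocus (R := Localization S) (ha.map _) ?_
    (isArtinian_of_le (torsionBySet_map_le_range_map_subtype ha))
  rw [Ideal.map, PrimeSpectrum.zeroLocus_span, support_subset_zeroLocus_iff]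
  rintro _ ⟨x, hx, rfl⟩ m'
  induction m' with | h m s =>
  obtain ⟨n, hn⟩ := support_subset_zeroLocus_iff.1 hM x hx m
  refine ⟨n, ?_⟩
  rw [← map_pow, algebraMap_smul, LocalizedModule.smul'_mk, hn, LocalizedModule.zero_mk]

lemma isArtinian_localizedModule_of_finite [IsNoetherianRing R] [Module.Finite R M]
    (h : ∀ p ∈ Module.support R M, ∀ q : PrimeSpectrum R, p ≤ q →
      Disjoint (S : Set R) q.asIdeal → p = q) :
    IsArtinian (Localization S) (LocalizedModule S M) := by
  refine isArtinian_of_support_subset_closedPoints fun P hP ↦ ?_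
  set p := PrimeSpectrum.comap (algebraMap R (Localization S)) P
  have hpM : p ∈ Module.support R M := by
    have hpM' : p ∈ Module.support R (LocalizedModule S M) :=
      Module.support_subset_preimage_comap (A := Localization S) hP
    obtain ⟨m', hm'⟩ := Module.mem_support_iff'.1 hpM'
    induction m' with | h m s =>
    exact Module.mem_support_iff'.2 ⟨m, fun r hr hrm ↦ hm' r hr (by
      rw [LocalizedModule.smul'_mk, hrm, LocalizedModule.zero_mk])⟩
  obtain ⟨Q, hQ, hPQ⟩ := P.asIdeal.exists_le_maximal P.2.ne_top
  have hQp : (⟨Q, hQ.isPrime⟩ : PrimeSpectrum (Localization S)) = P := by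
    apply PrimeSpectrum.localization_comap_injective (Localization S) S
    refine (h p hpM _ (Ideal.comap_mono hPQ) ?_).symm
    exact (IsLocalization.isPrime_iff_isPrime_disjoint S _ Q).1 hQ.isPrime |>.2
  exact hQp ▸ hQ

end ArtinianLocalization

section KrullDim

lemma krullDim_le_of_forall_exists_lt {α : Type*} [Preorder α] {A B : Set α} {n : ℕ}
    (hBA : B ⊆ A) (h : ∀ b ∈ B, ∃ a ∈ A, a < b) (hA : Order.krullDim A ≤ (n + 1 : ℕ)) :
    Order.krullDim B ≤ n := by
  refine iSup_le fun s ↦ ?_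
  obtain ⟨a, ha, hlt⟩ := h _ s.head.2
  let s' : LTSeries A := (s.map (Set.inclusion hBA) fun _ _ h ↦ h).cons ⟨a, ha⟩ hlt
  have hs : (s'.length : WithBot ℕ∞) ≤ (n + 1 : ℕ) :=
    (Order.LTSeries.length_le_krullDim s').trans hA
  have hs' : s'.length = s.length + 1 := RelSeries.cons_length _ _ _
  rw [hs', Nat.cast_le] at hs
  exact Nat.cast_le.2 (Nat.le_of_succ_le_succ hs)

variable {R : Type*} [CommRing R] {M : Type*} [AddCommGroup M] [Module R M]

lemma eq_of_le_of_krullDim_support_nonpos (h : Order.krullDim (Module.support R M) ≤ 0)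
    {p q : PrimeSpectrum R} (hp : p ∈ Module.support R M) (hpq : p ≤ q) : p = q :=
  hpq.antisymm (Order.krullDim_nonpos_iff_forall_isMax.1 h ⟨p, hp⟩
    (show _ ≤ (⟨q, Module.mem_support_mono hpq hp⟩ : Module.support R M) from hpq))

/-- The complement of the union of the minimal primes over `I`. Inverting it leaves a ring in which
`V(I)` has dimension `0`, while each of its elements cuts down the dimension of `V(I)`. -/
def minimalPrimesCompl (I : Ideal R) : Submonoid R where
  carrier := {y | ∀ p ∈ I.minimalPrimes, y ∉ p}
  one_mem' p hp := (Ideal.ne_top_iff_one p).1 hp.1.1.ne_top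
  mul_mem' hx hy p hp := hp.1.1.mul_notMem (hx p hp) (hy p hp)

lemma eq_of_le_of_disjoint_minimalPrimesCompl [IsNoetherianRing R] {I : Ideal R}
    {p q : PrimeSpectrum R} (hI : I ≤ p.asIdeal) (hpq : p ≤ q)
    (hq : Disjoint (minimalPrimesCompl I : Set R) q.asIdeal) : p = q := by
  have hsub : (q.asIdeal : Set R) ⊆ ⋃ P ∈ I.minimalPrimes, (P : Set R) := by
    intro y hy
    have hyS : ¬∀ P ∈ I.minimalPrimes, y ∉ P := fun h ↦ Set.disjoint_left.1 hq h hy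
    simpa only [Set.mem_iUnion₂, not_forall, not_not, SetLike.mem_coe] using hyS
  obtain ⟨P, hP, hqP⟩ := (Ideal.subset_union_prime_finite
    I.finite_minimalPrimes_of_isNoetherianRing ⊥ ⊥ fun P hP _ _ ↦ hP.1.1).1 hsub
  exact hpq.antisymm (hqP.trans (hP.2 ⟨p.2, hI⟩ (le_trans (b := q.asIdeal) hpq hqP)))

lemma exists_lt_of_mem_minimalPrimesCompl {I : Ideal R} {p : PrimeSpectrum R}
    (hI : I ≤ p.asIdeal) {y : R} (hy : y ∈ minimalPrimesCompl I) (hyp : y ∈ p.asIdeal) :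
    ∃ q : PrimeSpectrum R, I ≤ q.asIdeal ∧ q < p := by
  obtain ⟨P, hP, hPp⟩ := Ideal.exists_minimalPrimes_le hI
  refine ⟨⟨P, hP.1.1⟩, hP.1.2, lt_of_le_of_ne hPp ?_⟩
  rintro rfl
  exact hy P hP hyp

lemma krullDim_le_of_minimalPrimesCompl {I : Ideal R} {Z : Set (PrimeSpectrum R)} {n : ℕ}
    (hI : Order.krullDim (PrimeSpectrum.zeroLocus (I : Set R)) ≤ (n + 1 : ℕ))
    (hZ : Z ⊆ PrimeSpectrum.zeroLocus (I : Set R))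
    (h : ∀ p ∈ Z, ∃ y ∈ minimalPrimesCompl I, y ∈ p.asIdeal) : Order.krullDim Z ≤ n := by
  refine krullDim_le_of_forall_exists_lt hZ (fun p hp ↦ ?_) hI
  obtain ⟨y, hy, hyp⟩ := h p hp
  exact exists_lt_of_mem_minimalPrimesCompl (hZ hp) hy hyp

lemma exists_mem_asIdeal_of_subsingleton {S : Submonoid R} [Subsingleton (LocalizedModule S M)]
    {p : PrimeSpectrum R} (hp : p ∈ Module.support R M) : ∃ y ∈ S, y ∈ p.asIdeal := by
  obtain ⟨m, hm⟩ := Module.mem_support_iff_exists_annihilator.1 hp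
  obtain ⟨y, hy, hym⟩ := LocalizedModule.subsingleton_iff.1 ‹_› m
  exact ⟨y, hy, hm ((Submodule.mem_annihilator_span_singleton m y).2 hym)⟩

end KrullDim

section LowDimension

variable {R : Type u} [CommRing R] {M : Type u} [AddCommGroup M] [Module R M] {S : Submonoid R}
  {a : Ideal R}

instance (P Q : ObjectProperty (ModuleCat.{u} R)) [P.IsSerreClass] [Q.IsSerreClass] :
    (P ⊓ Q).IsSerreClass :=
  isSerreClass_of_exact ⟨prop_of_subsingleton P, prop_of_subsingleton Q⟩
    fun _ _ _ _ _ _ _ _ _ _ _ h h₁ h₃ ↦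
      ⟨prop_of_exact P h h₁.1 h₃.1, prop_of_exact Q h h₁.2 h₃.2⟩

instance [IsNoetherianRing R] : (ModuleCat.isFG.{u} R).IsSerreClass :=
  isSerreClass_of_exact (inferInstanceAs (Module.Finite R PUnit.{u + 1}))
    fun _ _ _ _ _ _ _ _ _ f g h (_ : Module.Finite R _) (_ : Module.Finite R _) ↦
      have := isNoetherian_of_range_eq_ker f g h.linearMap_ker_eq.symm
      (inferInstance : Module.Finite R _)

lemma modulesArtinianAt_of_finite_torsionBySet [IsNoetherianRing R]
    (hM : Module.support R M ⊆ PrimeSpectrum.zeroLocus a)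
    [Module.Finite R (Submodule.torsionBySet R M a)]
    (h : ∀ p ∈ Module.support R M, ∀ q : PrimeSpectrum R, p ≤ q →
      Disjoint (S : Set R) q.asIdeal → p = q) :
    modulesArtinianAt S (ModuleCat.of R M) := by
  have ha : a.FG := IsNoetherian.noetherian a
  refine isArtinian_localizedModule ha hM (isArtinian_localizedModule_of_finite ?_)
  rwa [support_torsionBySet R M ha hM]

lemma exists_subsingleton_localizedModule_quotient (hM : modulesArtinianAt S (ModuleCat.of R M))
    (x : R) : ∃ k : ℕ, let N := LinearMap.range (LinearMap.lsmul R M (x ^ k))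
      Subsingleton (LocalizedModule S (N ⧸ LinearMap.range (LinearMap.lsmul R N x))) := by
  have : IsArtinian (Localization S) (LocalizedModule S M) := hM
  obtain ⟨k, hk⟩ := IsArtinian.range_smul_pow_stabilizes (LocalizedModule S M)
    (algebraMap R (Localization S) x)
  refine ⟨k, LocalizedModule.subsingleton_iff.2 fun v ↦ ?_⟩
  obtain ⟨⟨_, m, rfl⟩, rfl⟩ := Submodule.mkQ_surjective _ v
  obtain ⟨m', hm'⟩ := (hk (k + 1) k.le_succ).le ⟨LocalizedModule.mk m 1, rfl⟩
  induction m' with | h m' s =>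
  simp only [LinearMap.smul_apply, LinearMap.id_apply, ← map_pow, algebraMap_smul,
    LocalizedModule.smul'_mk] at hm'
  obtain ⟨t, ht⟩ := LocalizedModule.mk_eq.1 hm'
  rw [one_smul] at ht
  refine ⟨t * s, (t * s).2, ?_⟩
  rw [← map_smul, Submodule.mkQ_apply, Submodule.Quotient.mk_eq_zero]
  refine ⟨t • ⟨_, m', rfl⟩, Subtype.ext ?_⟩
  calc x • (t : R) • x ^ k • m' = (t : R) • x ^ (k + 1) • m' := by
        rw [smul_comm x, ← mul_smul x, ← pow_succ']
    _ = ((t : R) * s) • x ^ k • m := ht.trans (mul_smul (t : R) (s : R) _).symm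

/-- After inverting `S` the chain `x ^ k M` becomes stationary, so that the cokernels of `x` which
are relevant for `prop_extModule_of_le` are `S`-torsion. -/
lemma prop_extModule_of_modulesArtinianAt [IsNoetherianRing R]
    (T : ObjectProperty (ModuleCat.{u} R)) [T.IsSerreClass]
    {Z : Set (PrimeSpectrum R)} {t : ℕ} (ht : t ≤ 1)
    (hX : ∀ (X : Type u) [AddCommGroup X] [Module R X], Module.support R X ⊆ Z →
      Subsingleton (LocalizedModule S X) →
      (∀ i < t, T (ModuleCat.of R (ExtModule R (R ⧸ a) X i))) →
        ∀ i, T (ModuleCat.of R (ExtModule R (R ⧸ a) X i)))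
    (hZ : Module.support R M ⊆ Z) (hM : modulesArtinianAt S (ModuleCat.of R M))
    (h : ∀ i ≤ t, T (ModuleCat.of R (ExtModule R (R ⧸ a) M i))) (i : ℕ) :
    T (ModuleCat.of R (ExtModule R (R ⧸ a) M i)) := by
  refine prop_extModule_of_le (modulesArtinianAt S ⊓ modulesSupportedIn Z) ht ?_ ⟨hM, hZ⟩ h i
  rintro M _ _ ⟨hM, hZ⟩ x -
  obtain ⟨k, hk⟩ := exists_subsingleton_localizedModule_quotient hM x
  refine ⟨k, hX _ ?_ hk⟩
  exact (Module.support_subset_of_surjective _ (Submodule.mkQ_surjective _)).trans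
    ((Module.support_subset_of_injective _ (Submodule.injective_subtype _)).trans hZ)

lemma finite_extModule_of_krullDim_nonpos [IsNoetherianRing R]
    (hM : Module.support R M ⊆ PrimeSpectrum.zeroLocus a)
    (hdim : Order.krullDim (Module.support R M) ≤ 0)
    (h : ∀ i ≤ 0, Module.Finite R (ExtModule R (R ⧸ a) M i)) (i : ℕ) :
    Module.Finite R (ExtModule R (R ⧸ a) M i) := by
  have : Module.Finite R (Submodule.torsionBySet R M a) :=
    (prop_extModule_zero_iff (ModuleCat.isFG R)).1 (h 0 le_rfl)
  refine prop_extModule_of_modulesArtinianAt (S := ⊥) (ModuleCat.isFG R) zero_le_one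
    (fun X _ _ _ hX _ i ↦ ?_) hM (modulesArtinianAt_of_finite_torsionBySet hM
      fun p hp q hpq _ ↦ eq_of_le_of_krullDim_support_nonpos hdim hp hpq) h i
  have : Subsingleton X := subsingleton_of_forall_eq 0 fun v ↦ by
    obtain ⟨r, hr, hrv⟩ := LocalizedModule.subsingleton_iff.1 hX v
    rwa [Submonoid.mem_bot.1 hr, one_smul] at hrv
  exact prop_extModule _ _ (prop_of_subsingleton _) i

lemma finite_extModule_of_krullDim_le_one [IsNoetherianRing R]
    (hM : Module.support R M ⊆ PrimeSpectrum.zeroLocus a)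
    (hdim : Order.krullDim (Module.support R M) ≤ 1)
    (h : ∀ i ≤ 1, Module.Finite R (ExtModule R (R ⧸ a) M i)) (i : ℕ) :
    Module.Finite R (ExtModule R (R ⧸ a) M i) := by
  have hfin : Module.Finite R (Submodule.torsionBySet R M a) :=
    (prop_extModule_zero_iff (ModuleCat.isFG R)).1 (h 0 zero_le_one)
  obtain ⟨I, hI⟩ : ∃ I : Ideal R, Module.support R M = PrimeSpectrum.zeroLocus I :=
    ⟨_, by rw [← support_torsionBySet R M (IsNoetherian.noetherian a) hM,
      Module.support_eq_zeroLocus]⟩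
  refine prop_extModule_of_modulesArtinianAt (S := minimalPrimesCompl I) (ModuleCat.isFG R) le_rfl
    (fun X _ _ hXM hX hX₀ ↦ ?_) subset_rfl (modulesArtinianAt_of_finite_torsionBySet hM
      fun p hp q hpq hq ↦ eq_of_le_of_disjoint_minimalPrimesCompl (hI.le hp) hpq hq) h i
  refine finite_extModule_of_krullDim_nonpos (hXM.trans hM) ?_ fun i hi ↦ hX₀ i (by lia)
  exact krullDim_le_of_minimalPrimesCompl (n := 0) (hI ▸ hdim) (hXM.trans hI.le)
    fun p hp ↦ exists_mem_asIdeal_of_subsingleton hp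

end LowDimension

lemma exists_fg_map_eq {R M₁ M₂ : Type*} [Ring R] [AddCommGroup M₁] [AddCommGroup M₂] [Module R M₁]
    [Module R M₂] {g : M₁ →ₗ[R] M₂} {N : Submodule R M₂} (hN : N.FG) (h : N ≤ LinearMap.range g) :
    ∃ N' : Submodule R M₁, N'.FG ∧ N'.map g = N := by
  classical
  obtain ⟨s, rfl⟩ := hN
  obtain ⟨t, -, rfl⟩ := Finset.subset_set_image_iff.1
    (Set.image_univ (f := g) ▸ Submodule.span_le.1 h : (s : Set M₂) ⊆ g '' Set.univ)
  exact ⟨Submodule.span R t, ⟨t, rfl⟩, by rw [Submodule.map_span, Finset.coe_image]⟩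

section GenericFiniteness

variable {R : Type u} [CommRing R] {M : Type u} [AddCommGroup M] [Module R M] (S : Submonoid R)

/-- The Serre class of modules `M` such that `M[1/y]` is a finitely generated `R[1/y]`-module for
some `y ∈ S`. -/
def genericallyFiniteModules : ObjectProperty (ModuleCat.{u} R) := fun M ↦
  ∃ y ∈ S, ∃ N : Submodule R M, N.FG ∧ ∀ m : M, ∃ k : ℕ, y ^ k • m ∈ N

instance [IsNoetherianRing R] : (genericallyFiniteModules S).IsSerreClass := by
  refine isSerreClass_of_exact ⟨1, S.one_mem, ⊥, Submodule.fg_bot, fun _ ↦ ⟨0, rfl⟩⟩ ?_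
  rintro M₁ M₂ M₃ _ _ _ _ _ _ f g h ⟨y₁, hy₁, N₁, hN₁, h₁⟩ ⟨y₃, hy₃, N₃, hN₃, h₃⟩
  have : IsNoetherian R N₃ := isNoetherian_of_fg_of_noetherian N₃ hN₃
  obtain ⟨N₂, hN₂, hN₂g⟩ := exists_fg_map_eq (g := g)
    (Submodule.FG.of_le hN₃ (inf_le_left : N₃ ⊓ LinearMap.range g ≤ N₃)) inf_le_right
  refine ⟨y₁ * y₃, S.mul_mem hy₁ hy₃, N₁.map f ⊔ N₂, (hN₁.map f).sup hN₂, fun m ↦ ?_⟩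
  obtain ⟨k, hk⟩ := h₃ (g m)
  obtain ⟨n₂, hn₂, hgn₂⟩ := hN₂g.ge ⟨hk, y₃ ^ k • m, map_smul g _ m⟩
  obtain ⟨m₁, hm₁⟩ := (h (y₃ ^ k • m - n₂)).1 (by rw [map_sub, map_smul, hgn₂, sub_self])
  obtain ⟨j, hj⟩ := h₁ m₁
  have hmem : y₁ ^ j • y₃ ^ k • m ∈ N₁.map f ⊔ N₂ := by
    rw [← sub_add_cancel (y₃ ^ k • m) n₂, ← hm₁, smul_add, ← map_smul]
    exact add_mem (Submodule.mem_sup_left ⟨_, hj, rfl⟩)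
      (Submodule.mem_sup_right (N₂.smul_mem _ hn₂))
  refine ⟨j + k, ?_⟩
  convert Submodule.smul_mem _ (y₁ ^ k * y₃ ^ j) hmem using 1
  simp only [smul_smul]
  ring_nf

variable {S}

lemma genericallyFiniteModules_of_finite [Module.Finite R M] :
    genericallyFiniteModules S (ModuleCat.of R M) :=
  ⟨1, S.one_mem, ⊤, Module.Finite.fg_top, fun _ ↦ ⟨0, trivial⟩⟩

lemma genericallyFiniteModules_of_support_subset {y : R} (hy : y ∈ S)
    (h : Module.support R M ⊆ PrimeSpectrum.zeroLocus {y}) :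
    genericallyFiniteModules S (ModuleCat.of R M) :=
  ⟨y, hy, ⊥, Submodule.fg_bot, support_subset_zeroLocus_iff.1 h y rfl⟩

lemma exists_mem_annihilator_of_subsingleton [Module.Finite R M]
    [Subsingleton (LocalizedModule S M)] : ∃ y ∈ S, y ∈ Module.annihilator R M := by
  obtain ⟨y, hy⟩ := Module.Finite.exists_smul_of_comp_eq_of_isLocalizedModule S
    (LocalizedModule.mkLinearMap S M) .id 0 (LinearMap.ext fun _ ↦ Subsingleton.elim _ _)
  rw [smul_zero] at hy
  exact ⟨y, y.2, Module.mem_annihilator.2 fun m ↦ congr($hy m)⟩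

lemma subsingleton_localizedModule_of_injective {N : Type*} [AddCommGroup N] [Module R N]
    [Subsingleton (LocalizedModule S M)] {f : N →ₗ[R] M} (hf : Function.Injective f) :
    Subsingleton (LocalizedModule S N) :=
  (LocalizedModule.map_injective S f hf).subsingleton

lemma exists_support_subset_zeroLocus_singleton [Subsingleton (LocalizedModule S M)]
    (h : genericallyFiniteModules S (ModuleCat.of R M)) :
    ∃ y ∈ S, Module.support R M ⊆ PrimeSpectrum.zeroLocus {y} := by
  obtain ⟨y, hy, N, hN, hyN⟩ := h
  have : Module.Finite R N := Module.Finite.iff_fg.2 hN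
  have := subsingleton_localizedModule_of_injective (S := S) N.injective_subtype
  obtain ⟨s, hs, hsN⟩ := exists_mem_annihilator_of_subsingleton (S := S) (M := N)
  refine ⟨s * y, S.mul_mem hs hy, support_subset_zeroLocus_iff.2 ?_⟩
  rintro _ rfl m
  obtain ⟨k, hk⟩ := hyN m
  have hsk : s • y ^ k • m = 0 := congrArg Subtype.val (Module.mem_annihilator.1 hsN ⟨_, hk⟩)
  refine ⟨k + 1, ?_⟩
  calc (s * y) ^ (k + 1) • m = (s ^ k * y) • s • y ^ k • m := by simp only [smul_smul]; ring_nf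
    _ = 0 := by rw [hsk, smul_zero]

lemma genericallyFiniteModules_extModule [IsNoetherianRing R] {a I : Ideal R}
    (ha : Module.support R M ⊆ PrimeSpectrum.zeroLocus a)
    (hI : Module.support R M = PrimeSpectrum.zeroLocus I)
    (h : ∀ i ≤ 1, Module.Finite R (ExtModule R (R ⧸ a) M i)) (i : ℕ) :
    genericallyFiniteModules (minimalPrimesCompl I)
      (ModuleCat.of R (ExtModule R (R ⧸ a) M i)) := by
  have hfin : Module.Finite R (Submodule.torsionBySet R M a) :=
    (prop_extModule_zero_iff (ModuleCat.isFG R)).1 (h 0 zero_le_one)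
  refine prop_extModule_of_modulesArtinianAt _ le_rfl (fun X _ _ hX hXS hX₀ i ↦ ?_) ha
    (modulesArtinianAt_of_finite_torsionBySet ha fun p hp q hpq hq ↦
      eq_of_le_of_disjoint_minimalPrimesCompl (hI.le hp) hpq hq)
    (fun i hi ↦ have := h i hi; genericallyFiniteModules_of_finite) i
  have hX₀' := (prop_extModule_zero_iff _).1 (hX₀ 0 one_pos)
  have := subsingleton_localizedModule_of_injective (S := minimalPrimesCompl I)
    (Submodule.torsionBySet R X a).injective_subtype
  obtain ⟨y, hy, hXy⟩ := exists_support_subset_zeroLocus_singleton hX₀'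
  rw [support_torsionBySet R X (IsNoetherian.noetherian a) hX] at hXy
  exact genericallyFiniteModules_of_support_subset hy
    (prop_extModule (modulesSupportedIn (PrimeSpectrum.zeroLocus {y})) _ hXy i)

end GenericFiniteness

section Reduction

variable {R : Type u} [CommRing R] {M : Type u} [AddCommGroup M] [Module R M] {a : Ideal R}

lemma krullDim_le_of_subset {α : Type*} [Preorder α] {A B : Set α} (h : A ⊆ B) :
    Order.krullDim A ≤ Order.krullDim B :=
  Order.krullDim_le_of_strictMono (Set.inclusion h) fun _ _ h ↦ h

lemma support_subset_zeroLocus_of_mem_annihilator {x : R} (hx : x ∈ Module.annihilator R M) :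
    Module.support R M ⊆ PrimeSpectrum.zeroLocus {x} := fun _ hp ↦
  Set.singleton_subset_iff.2 (Module.annihilator_le_of_mem_support hp hx)

lemma support_ker_lsmul_subset (x : R) :
    Module.support R (LinearMap.ker (LinearMap.lsmul R M x)) ⊆
      Module.support R M ∩ PrimeSpectrum.zeroLocus {x} :=
  Set.subset_inter (Module.support_subset_of_injective _ (Submodule.injective_subtype _)) <|
    support_subset_zeroLocus_of_mem_annihilator <|
      Module.mem_annihilator.2 fun m ↦ Subtype.ext m.2

lemma support_quotient_range_lsmul_subset (x : R) :
    Module.support R (M ⧸ LinearMap.range (LinearMap.lsmul R M x)) ⊆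
      Module.support R M ∩ PrimeSpectrum.zeroLocus {x} :=
  Set.subset_inter (Module.support_subset_of_surjective _ (Submodule.mkQ_surjective _)) <|
    support_subset_zeroLocus_of_mem_annihilator <| Module.mem_annihilator.2 <|
      (Submodule.mkQ_surjective _).forall.2 fun m ↦
        (Submodule.Quotient.mk_eq_zero _).2 ⟨m, rfl⟩

lemma isoModSerre_lsmul_extModule [IsNoetherianRing R]
    (hM : Module.support R M ⊆ PrimeSpectrum.zeroLocus a) {x : R}
    (hdim : Order.krullDim ↥(Module.support R M ∩ PrimeSpectrum.zeroLocus {x}) ≤ 1)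
    (h : ∀ i ≤ 2, Module.Finite R (ExtModule R (R ⧸ a) M i)) (i : ℕ) :
    (ModuleCat.isFG R).isoModSerre
      (ModuleCat.ofHom (LinearMap.lsmul R (ExtModule R (R ⧸ a) M i) x)) := by
  have of_le_one {X : Type u} [AddCommGroup X] [Module R X]
      (hX : Module.support R X ⊆ Module.support R M ∩ PrimeSpectrum.zeroLocus {x}) :=
    finite_extModule_of_krullDim_le_one (hX.trans (Set.inter_subset_left.trans hM))
      ((krullDim_le_of_subset hX).trans hdim)
  have hker := of_le_one (support_ker_lsmul_subset x) <|
    prop_extModule_ker (T := ModuleCat.isFG R) le_rfl fun i hi ↦ h i (hi.trans one_le_two)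
  have hcoker := of_le_one (support_quotient_range_lsmul_subset x) fun i hi ↦
    prop_extModule_coker (T := ModuleCat.isFG R) hker h i (Nat.lt_succ_of_le hi)
  rw [← ExtModule.map_lsmul]
  exact isoModSerre_map _ _ hker hcoker i

end Reduction

section BaseChange

open scoped TensorProduct

namespace ExtModule

open Abelian

variable {R : Type u} [CommRing R] {K P C : Type u} [AddCommGroup K] [Module R K]
  [AddCommGroup P] [Module R P] [AddCommGroup C] [Module R C] [Module.Projective R P]
  (N : Type u) [AddCommGroup N] [Module R N] {f : K →ₗ[R] P} {g : P →ₗ[R] C}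
  (hf : Function.Injective f) (hfg : Function.Exact f g) (hg : Function.Surjective g)

include hf hfg hg

/-- `Ext^1_R(C, N)` as the cokernel of `Hom(P, N) → Hom(K, N)`, for a short exact sequence
`0 → K → P → C → 0` with `P` projective. -/
noncomputable def oneEquiv :
    ((K →ₗ[R] N) ⧸ LinearMap.range (LinearMap.lcomp R N f)) ≃ₗ[R] ExtModule R C N 1 := by
  have hS := shortExact hf hfg hg
  let δ := hS.extClass.precompOfLinear R (ModuleCat.of R N) (add_zero 1)
  let e (A : Type u) [AddCommGroup A] [Module R A] : ExtModule R A N 0 ≃ₗ[R] (A →ₗ[R] N) :=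
    Ext.linearEquiv₀.trans ModuleCat.homLinearEquiv
  have hP : Projective (ModuleCat.of R P) := inferInstance
  have hδ : Function.Surjective δ := fun x ↦
    Ext.contravariant_sequence_exact₃ hS (ModuleCat.of R N) x
      ((Ext.subsingleton_of_projective (ModuleCat.of R P) _ 0).elim _ _) (add_zero 1)
  have hcomp (φ : P →ₗ[R] N) :
      (e K).symm (φ ∘ₗ f) = (Ext.mk₀ (ModuleCat.ofHom f)).comp ((e P).symm φ) (zero_add 0) :=
    (Ext.mk₀_comp_mk₀ (ModuleCat.ofHom f) (ModuleCat.ofHom φ)).symm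
  refine Function.Exact.linearEquivOfSurjective (g := δ ∘ₗ (e K).symm.toLinearMap)
    (fun φ ↦ ⟨fun hφ ↦ ?_, ?_⟩) (hδ.comp (e K).symm.surjective)
  · obtain ⟨x, hx⟩ := Ext.contravariant_sequence_exact₁ hS (ModuleCat.of R N) _ (add_zero 1) hφ
    refine ⟨e P x, (e K).symm.injective ?_⟩
    rw [LinearMap.lcomp_apply', hcomp, LinearEquiv.symm_apply_apply]
    exact hx
  · rintro ⟨φ, rfl⟩
    refine (congrArg δ (hcomp φ)).trans ?_
    exact hS.extClass_comp_assoc (h := add_zero 1) _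

/-- The dimension shifting isomorphism `Ext^(i+1)_R(K, N) ≃ Ext^(i+2)_R(C, N)` for a short exact
sequence `0 → K → P → C → 0` with `P` projective. -/
noncomputable def dimensionShift (i : ℕ) : ExtModule R K N (i + 1) ≃ₗ[R] ExtModule R C N (i + 2) :=
  have hS := shortExact hf hfg hg
  have hP : Projective (ModuleCat.of R P) := inferInstance
  have h (i : ℕ) := Ext.subsingleton_of_projective (ModuleCat.of R P) (ModuleCat.of R N) i
  LinearEquiv.ofBijective
    (hS.extClass.precompOfLinear R (ModuleCat.of R N) (add_comm 1 (i + 1)))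
    ⟨(injective_iff_map_eq_zero _).2 fun x hx ↦ by
      obtain ⟨x', rfl⟩ := Ext.contravariant_sequence_exact₁ hS (ModuleCat.of R N) x
        (add_comm 1 (i + 1)) hx
      rw [(h i).elim x' 0]
      exact Ext.comp_zero .., fun x ↦
      Ext.contravariant_sequence_exact₃ hS (ModuleCat.of R N) x ((h (i + 1)).elim _ _)
        (add_comm 1 (i + 1))⟩

end ExtModule

variable {R : Type u} [CommRing R] (R' : Type u) [CommRing R'] [Algebra R R']
  (C M : Type u) [AddCommGroup C] [Module R C] [AddCommGroup M] [Module R M]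

variable [IsNoetherianRing R] [Module.Flat R R'] [Module.Finite R C]

/-- `Ext^1_R(C, M)` is the cokernel of `Hom(P, M) → Hom(K, M)` for a presentation
`0 → K → P → C → 0`, and `Hom` out of finitely presented modules commutes with flat base change. -/
lemma nonempty_tensorProduct_extModule_one_equiv :
    Nonempty (R' ⊗[R] ExtModule R C M 1 ≃ₗ[R'] ExtModule R' (R' ⊗[R] C) (R' ⊗[R] M) 1) := by
  obtain ⟨P, _, _, _, _, p, hp⟩ := Module.exists_finite_presentation R C
  let ι := (LinearMap.ker p).subtype
  have e₁ := ExtModule.oneEquiv M (LinearMap.ker p).injective_subtype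
    (LinearMap.exact_subtype_ker_map p) hp
  have e₂ := ExtModule.oneEquiv (R' ⊗[R] M) (f := ι.baseChange R') (g := p.baseChange R')
    (Module.Flat.lTensor_preserves_injective_linearMap _ (LinearMap.ker p).injective_subtype)
    (lTensor_exact R' (LinearMap.exact_subtype_ker_map p) hp) (LinearMap.lTensor_surjective R' hp)
  have := Module.finitePresentation_of_finite R P
  have := Module.finitePresentation_of_finite R (LinearMap.ker p)
  let eP := (Module.FinitePresentation.isBaseChange_map R P M R').equiv
  let eK := (Module.FinitePresentation.isBaseChange_map R (LinearMap.ker p) M R').equiv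
  have hcomm : eK.toLinearMap ∘ₗ (LinearMap.lcomp R M ι).baseChange R' =
      LinearMap.lcomp R' (R' ⊗[R] M) (ι.baseChange R') ∘ₗ eP.toLinearMap :=
    TensorProduct.AlgebraTensorModule.ext fun r φ ↦ by
      simp [eK, eP, IsBaseChange.equiv_tmul, LinearMap.lcomp_apply', LinearMap.baseChange_comp]
  have hrange := congrArg LinearMap.range hcomm
  rw [LinearMap.range_comp, LinearMap.range_comp, LinearEquiv.range, Submodule.map_top] at hrange
  let q := (LinearMap.range (LinearMap.lcomp R M ι)).mkQ
  have hq : Function.Surjective q := Submodule.mkQ_surjective _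
  have hexact : Function.Exact ((LinearMap.lcomp R M ι).baseChange R') (q.baseChange R') :=
    lTensor_exact R' (LinearMap.exact_map_mkQ_range _) hq
  have e₃ := hexact.linearEquivOfSurjective (LinearMap.lTensor_surjective R' hq)
  exact ⟨(e₁.symm.baseChange R R' _ _).trans (e₃.symm.trans
    ((Submodule.Quotient.equiv _ _ eK hrange).trans e₂))⟩

theorem nonempty_tensorProduct_extModule_equiv (i : ℕ) :
    Nonempty (R' ⊗[R] ExtModule R C M i ≃ₗ[R'] ExtModule R' (R' ⊗[R] C) (R' ⊗[R] M) i) := by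
  induction i generalizing C with
  | zero =>
    have := Module.finitePresentation_of_finite R C
    exact ⟨((Abelian.Ext.linearEquiv₀.trans ModuleCat.homLinearEquiv).baseChange R R' _ _).trans
      ((Module.FinitePresentation.isBaseChange_map R C M R').equiv.trans
        (Abelian.Ext.linearEquiv₀.trans ModuleCat.homLinearEquiv).symm)⟩
  | succ i ih =>
    cases i with
    | zero => exact nonempty_tensorProduct_extModule_one_equiv R' C M
    | succ i =>
      obtain ⟨P, _, _, _, _, p, hp⟩ := Module.exists_finite_presentation R C
      obtain ⟨e⟩ := ih (LinearMap.ker p)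
      have e₁ := ExtModule.dimensionShift M (LinearMap.ker p).injective_subtype
        (LinearMap.exact_subtype_ker_map p) hp i
      have e₂ := ExtModule.dimensionShift (R' ⊗[R] M)
        (f := (LinearMap.ker p).subtype.baseChange R') (g := p.baseChange R')
        (Module.Flat.lTensor_preserves_injective_linearMap _ (LinearMap.ker p).injective_subtype)
        (lTensor_exact R' (LinearMap.exact_subtype_ker_map p) hp)
        (LinearMap.lTensor_surjective R' hp) i
      exact ⟨(e₁.symm.baseChange R R' _ _).trans (e.trans e₂)⟩

end BaseChange

section BaseChangeQuotient

open scoped TensorProduct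

namespace ExtModule

variable {R : Type u} [CommRing R] {C C' : Type u} [AddCommGroup C] [Module R C]
  [AddCommGroup C'] [Module R C'] (e : C ≃ₗ[R] C') (M : Type u) [AddCommGroup M] [Module R M]

/-- The isomorphism `Ext^i(C', M) ≃ Ext^i(C, M)` induced by an isomorphism of the first
variables. -/
noncomputable def congrLeft (i : ℕ) : ExtModule R C' M i ≃ₗ[R] ExtModule R C M i :=
  .ofLinearMap
    ((Abelian.Ext.mk₀ e.toModuleIso.hom).precompOfLinear R (ModuleCat.of R M) (zero_add i))
    ((Abelian.Ext.mk₀ e.toModuleIso.inv).precompOfLinear R (ModuleCat.of R M) (zero_add i))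
    (LinearMap.ext fun x ↦ by
      simp only [LinearMap.comp_apply, Abelian.Ext.bilinearCompOfLinear_apply_apply,
        Abelian.Ext.mk₀_comp_mk₀_assoc, Iso.hom_inv_id, Abelian.Ext.mk₀_id_comp,
        LinearMap.id_apply])
    (LinearMap.ext fun x ↦ by
      simp only [LinearMap.comp_apply, Abelian.Ext.bilinearCompOfLinear_apply_apply,
        Abelian.Ext.mk₀_comp_mk₀_assoc, Iso.inv_hom_id, Abelian.Ext.mk₀_id_comp,
        LinearMap.id_apply])

end ExtModule

variable {R : Type u} [CommRing R] (R' : Type u) [CommRing R'] [Algebra R R']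
  (M : Type u) [AddCommGroup M] [Module R M]

theorem nonempty_tensorProduct_extModule_quotient_equiv [IsNoetherianRing R] [Module.Flat R R']
    (a : Ideal R) (i : ℕ) :
    Nonempty (R' ⊗[R] ExtModule R (R ⧸ a) M i ≃ₗ[R']
      ExtModule R' (R' ⧸ a.map (algebraMap R R')) (R' ⊗[R] M) i) := by
  obtain ⟨e⟩ := nonempty_tensorProduct_extModule_equiv (R := R) R' (R ⧸ a) M i
  exact ⟨e.trans (ExtModule.congrLeft
    (Algebra.TensorProduct.quotIdealMapEquivTensorQuot R' a).toLinearEquiv (R' ⊗[R] M) i)⟩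

lemma support_tensorProduct_subset :
    Module.support R' (R' ⊗[R] M) ⊆
      PrimeSpectrum.comap (algebraMap R R') ⁻¹' Module.support R M := by
  intro p hp
  by_contra h
  rw [Set.mem_preimage, Module.notMem_support_iff'] at h
  refine Module.notMem_support_iff'.2 (fun x ↦ ?_) hp
  induction x with
  | zero => exact ⟨1, p.1.one_notMem, smul_zero 1⟩
  | add v w hv hw =>
    obtain ⟨r, hr, hrv⟩ := hv
    obtain ⟨s, hs, hsw⟩ := hw
    refine ⟨r * s, fun h ↦ (p.2.mem_or_mem h).elim hr hs, ?_⟩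
    rw [smul_add, mul_smul r s w, hsw, mul_comm, mul_smul, hrv, smul_zero, smul_zero, add_zero]
  | tmul r v =>
    obtain ⟨s, hs, hsv⟩ := h v
    exact ⟨algebraMap R R' s, hs, by
      rw [algebraMap_smul, ← TensorProduct.tmul_smul, hsv, TensorProduct.tmul_zero]⟩

variable {M} in
lemma support_tensorProduct_subset_zeroLocus {a : Ideal R}
    (hM : Module.support R M ⊆ PrimeSpectrum.zeroLocus (a : Set R)) :
    Module.support R' (R' ⊗[R] M) ⊆
      PrimeSpectrum.zeroLocus (a.map (algebraMap R R') : Set R') := by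
  refine (support_tensorProduct_subset R' M).trans ((Set.preimage_mono hM).trans ?_)
  rw [PrimeSpectrum.preimage_comap_zeroLocus, Ideal.map, PrimeSpectrum.zeroLocus_span]

lemma finite_extModule_tensorProduct [IsNoetherianRing R] [Module.Flat R R'] {a : Ideal R} {i : ℕ}
    (h : Module.Finite R (ExtModule R (R ⧸ a) M i)) :
    Module.Finite R' (ExtModule R' (R' ⧸ a.map (algebraMap R R')) (R' ⊗[R] M) i) := by
  obtain ⟨e⟩ := nonempty_tensorProduct_extModule_quotient_equiv R' M a i
  exact Module.Finite.equiv e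

end BaseChangeQuotient

section AdicNoetherian

variable {A : Type*} [CommRing A]

lemma isPrecomplete_pi (I : Ideal A) (ι : Type*) [Finite ι] [IsPrecomplete I A] :
    IsPrecomplete I (ι → A) := by
  have := Fintype.ofFinite ι
  classical
  refine AdicCompletion.of_surjective_iff.1 fun x ↦ ?_
  choose L hL using fun j ↦ AdicCompletion.of_surjective I A (AdicCompletion.pi I _ x j)
  refine ⟨L, (AdicCompletion.piEquivOfFintype I fun _ : ι ↦ A).injective (funext fun j ↦ ?_)⟩
  rw [AdicCompletion.piEquivOfFintype_apply, AdicCompletion.piEquivOfFintype_apply, ← hL]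
  rfl

lemma finite_of_finite_quotient_smul_top (I : Ideal A) [IsPrecomplete I A] (T : Type*)
    [AddCommGroup T] [Module A T] [IsHausdorff I T]
    [Module.Finite A (T ⧸ (I • ⊤ : Submodule A T))] : Module.Finite A T := by
  obtain ⟨n, f, hf⟩ := Module.Finite.exists_fin' A (T ⧸ (I • ⊤ : Submodule A T))
  obtain ⟨g, hg⟩ := Module.projective_lifting_property (I • ⊤ : Submodule A T).mkQ f
    (Submodule.mkQ_surjective _)
  have := isPrecomplete_pi I (Fin n)
  exact .of_surjective g (surjective_of_mkQ_comp_surjective (I := I) (hg ▸ hf))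

lemma isHausdorff_submodule {I : Ideal A} {M : Type*} [AddCommGroup M] [Module A M]
    [IsHausdorff I M] (N : Submodule A M) : IsHausdorff I N := by
  refine ⟨fun x hx ↦ Subtype.ext (IsHausdorff.haus ‹_› (x : M) fun n ↦ ?_)⟩
  rw [SModEq.zero]
  exact Submodule.smul_top_le_comap_smul_top (I ^ n) N.subtype (SModEq.zero.1 (hx n))

/-- A prime `P` not containing `y` satisfies `P ∩ (y) = y P`, so that `P / y P` embeds into the
noetherian ring `A / (y)`. -/
lemma isNoetherianRing_of_quotient_span_singleton (y : A) [IsAdicComplete (Ideal.span {y}) A]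
    [IsNoetherianRing (A ⧸ Ideal.span {y})] : IsNoetherianRing A := by
  have fg_map (P : Ideal A) : (P.map (Ideal.Quotient.mk (Ideal.span {y}))).FG :=
    IsNoetherian.noetherian _
  refine .of_prime fun P hP ↦ ?_
  by_cases hy : y ∈ P
  · refine Ideal.fg_of_fg_map_of_fg_inf_ker_of_surjective (fg_map P) ?_
      Ideal.Quotient.mk_surjective
    rw [Ideal.mk_ker, inf_eq_right.2 ((Ideal.span_singleton_le_iff_mem P).2 hy)]
    exact Submodule.fg_span_singleton y
  · have := isHausdorff_submodule (I := Ideal.span {y}) P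
    let f : P →ₗ[A] A ⧸ Ideal.span {y} := (Ideal.span {y}).mkQ ∘ₗ P.subtype
    have hker : LinearMap.ker f = Ideal.span {y} • ⊤ := by
      ext x
      rw [LinearMap.mem_ker, LinearMap.comp_apply, P.subtype_apply, Submodule.mkQ_apply,
        Submodule.Quotient.mk_eq_zero, Ideal.mem_span_singleton,
        Submodule.ideal_span_singleton_smul, Submodule.mem_smul_pointwise_iff_exists]
      constructor
      · rintro ⟨r, hr⟩
        exact ⟨⟨r, (hP.mem_or_mem (hr ▸ x.2)).resolve_left hy⟩, trivial, Subtype.ext hr.symm⟩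
      · rintro ⟨r, -, rfl⟩
        exact ⟨r, rfl⟩
    have hrange : LinearMap.range f =
        (P.map (Ideal.Quotient.mk (Ideal.span {y}))).restrictScalars A := by
      ext z
      simp only [f, LinearMap.mem_range, LinearMap.comp_apply, Submodule.subtype_apply,
        Subtype.exists, exists_prop, Submodule.restrictScalars_mem,
        Ideal.mem_map_iff_of_surjective _ Ideal.Quotient.mk_surjective]
      rfl
    have : Module.Finite A (P ⧸ (Ideal.span {y} • ⊤ : Submodule A P)) := by
      have : Module.Finite A (LinearMap.range f) := hrange ▸ Module.Finite.iff_fg.2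
        (Submodule.FG.restrictScalars_of_surjective (fg_map P) Ideal.Quotient.mk_surjective)
      exact .equiv (f.quotKerEquivRange.symm ≪≫ₗ Submodule.quotEquivOfEq _ _ hker)
    exact Module.Finite.iff_fg.1 (finite_of_finite_quotient_smul_top (Ideal.span {y}) P)

end AdicNoetherian

section DivisibleTorsion

variable {A D : Type*} [CommRing A] [AddCommGroup D] [Module A D] {y : A}

variable (D y) in
/-- The module `Hom(A[1/y]/A, D)`: the sequences in `D` which are compatible under multiplication by
`y`, starting from an element killed by `y`. -/
def torsionSequences : Submodule A (ℕ → D) where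
  carrier := {d | y • d 0 = 0 ∧ ∀ k, y • d (k + 1) = d k}
  add_mem' hd he := ⟨by rw [Pi.add_apply, smul_add, hd.1, he.1, add_zero],
    fun k ↦ by rw [Pi.add_apply, smul_add, hd.2, he.2, Pi.add_apply]⟩
  zero_mem' := ⟨smul_zero y, fun _ ↦ smul_zero y⟩
  smul_mem' r d hd := ⟨by rw [Pi.smul_apply, smul_comm, hd.1, smul_zero],
    fun k ↦ by rw [Pi.smul_apply, smul_comm, hd.2, Pi.smul_apply]⟩

variable (D y) in
/-- Evaluation of a compatible sequence at `0`; it identifies `(0 :_D y)` with the quotient of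
`torsionSequences D y` by `y` when `D` is `y`-divisible. -/
def torsionSequencesHead : torsionSequences D y →ₗ[A] LinearMap.ker (LinearMap.lsmul A D y) :=
  (LinearMap.proj 0 ∘ₗ (torsionSequences D y).subtype).codRestrict _ fun d ↦ d.2.1

lemma torsionSequences_pow_smul {d : ℕ → D} (hd : d ∈ torsionSequences D y) (k : ℕ) :
    y ^ (k + 1) • d k = 0 := by
  induction k with
  | zero => rw [zero_add, pow_one, hd.1]
  | succ k ih => rw [pow_succ, mul_smul, hd.2, ih]

instance : IsHausdorff (Ideal.span {y}) (torsionSequences D y) := by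
  refine ⟨fun d hd ↦ Subtype.ext (funext fun k ↦ ?_)⟩
  have hk := SModEq.zero.1 (hd (k + 1))
  rw [Ideal.span_singleton_pow, Submodule.ideal_span_singleton_smul,
    Submodule.mem_smul_pointwise_iff_exists] at hk
  obtain ⟨e, -, rfl⟩ := hk
  exact torsionSequences_pow_smul e.2 k

lemma ker_torsionSequencesHead :
    LinearMap.ker (torsionSequencesHead D y) = Ideal.span {y} • ⊤ := by
  ext d
  rw [Submodule.ideal_span_singleton_smul, Submodule.mem_smul_pointwise_iff_exists]
  constructor
  · intro hd
    have hd₀ : (d : ℕ → D) 0 = 0 := congr_arg Subtype.val (LinearMap.mem_ker.1 hd)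
    exact ⟨⟨fun k ↦ (d : ℕ → D) (k + 1), (d.2.2 0).trans hd₀, fun k ↦ d.2.2 (k + 1)⟩, trivial,
      Subtype.ext (funext d.2.2)⟩
  · rintro ⟨e, -, rfl⟩
    exact Subtype.ext e.2.1

lemma exists_mem_torsionSequences (hy : Function.Surjective (LinearMap.lsmul A D y)) {k : ℕ} {d : D}
    (hd : y ^ (k + 1) • d = 0) : ∃ e ∈ torsionSequences D y, e k = d := by
  obtain ⟨s, hs⟩ := hy.hasRightInverse
  refine ⟨fun j ↦ y ^ (k - j) • s^[j - k] d, ⟨?_, fun j ↦ ?_⟩, ?_⟩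
  · simp only [Nat.zero_sub, Function.iterate_zero, id, Nat.sub_zero]
    rw [← mul_smul, ← pow_succ', hd]
  · change y • y ^ (k - (j + 1)) • s^[j + 1 - k] d = y ^ (k - j) • s^[j - k] d
    rcases lt_or_ge j k with hj | hj
    · rw [← mul_smul, ← pow_succ', Nat.sub_eq_zero_of_le hj.le, Nat.sub_eq_zero_of_le hj,
        ← Nat.sub_sub, Nat.sub_add_cancel (Nat.sub_pos_of_lt hj)]
    · rw [Nat.sub_eq_zero_of_le hj, Nat.sub_eq_zero_of_le (hj.trans j.le_succ), Nat.succ_sub hj,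
        Function.iterate_succ_apply', pow_zero, one_smul, one_smul]
      exact hs _
  · simp only [Nat.sub_self, pow_zero, Function.iterate_zero, id, one_smul]

lemma annihilator_torsionSequences_le (hD : Module.support A D ⊆ PrimeSpectrum.zeroLocus {y})
    (hy : Function.Surjective (LinearMap.lsmul A D y)) :
    Module.annihilator A (torsionSequences D y) ≤ Module.annihilator A D := by
  refine fun z hz ↦ Module.mem_annihilator.2 fun d ↦ ?_
  obtain ⟨k, hk⟩ := support_subset_zeroLocus_iff.1 hD y rfl d
  obtain ⟨e, he, rfl⟩ := exists_mem_torsionSequences hy (k := k) (d := d)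
    (by rw [pow_succ', mul_smul, hk, smul_zero])
  exact congr_fun (congr_arg Subtype.val (Module.mem_annihilator.1 hz ⟨e, he⟩)) k

lemma exists_mem_annihilator_sub_pow_mem [IsPrecomplete (Ideal.span {y}) A]
    (hD : Module.support A D ⊆ PrimeSpectrum.zeroLocus {y})
    (hy : Function.Surjective (LinearMap.lsmul A D y))
    [Module.Finite A (LinearMap.ker (LinearMap.lsmul A D y))] {v : A}
    (hv : v ∈ Module.annihilator A (LinearMap.ker (LinearMap.lsmul A D y))) :
    ∃ z ∈ Module.annihilator A D, ∃ n, v ^ n - z ∈ Ideal.span {y} := by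
  have hhead : Function.Surjective (torsionSequencesHead D y) := fun d ↦ by
    obtain ⟨e, he, hed⟩ := exists_mem_torsionSequences hy (k := 0) (d := (d : D))
      (by rw [zero_add, pow_one]; exact d.2)
    exact ⟨⟨e, he⟩, Subtype.ext hed⟩
  let e := (Submodule.quotEquivOfEq _ _ ker_torsionSequencesHead).symm ≪≫ₗ
    (torsionSequencesHead D y).quotKerEquivOfSurjective hhead
  have := Module.Finite.equiv e.symm
  have := finite_of_finite_quotient_smul_top (Ideal.span {y}) (torsionSequences D y)
  have hrad : v ∈ (Module.annihilator A (torsionSequences D y) ⊔ Ideal.span {y}).radical := by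
    rw [Ideal.radical_eq_sInf, Submodule.mem_sInf]
    rintro p ⟨hp, hprime⟩
    have hsupp : (⟨p, hprime⟩ : PrimeSpectrum A) ∈
        Module.support A (LinearMap.ker (LinearMap.lsmul A D y)) := by
      rw [← e.support_eq, Module.support_quotient, Module.support_eq_zeroLocus]
      exact ⟨le_sup_left.trans hp, le_sup_right.trans hp⟩
    exact Module.annihilator_le_of_mem_support hsupp hv
  obtain ⟨n, hn⟩ := hrad
  obtain ⟨z, hz, w, hw, hzw⟩ := Submodule.mem_sup.1 hn
  exact ⟨z, annihilator_torsionSequences_le hD hy hz, n, by rwa [← hzw, add_sub_cancel_left]⟩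

end DivisibleTorsion

section AdicCompletion

open scoped TensorProduct

lemma krullDim_zeroLocus_le_one {A : Type*} [CommRing A] [IsNoetherianRing A] {y : A}
    (hy : y ∈ (⊥ : Ideal A).jacobson) {J : Ideal A}
    (h : ∀ q : PrimeSpectrum A, J ≤ q.asIdeal → y ∈ q.asIdeal → q.asIdeal.IsMaximal) :
    Order.krullDim (PrimeSpectrum.zeroLocus (J : Set A)) ≤ 1 := by
  have hann : Module.annihilator A (A ⧸ J) = J := Ideal.annihilator_quotient
  have hJ : Module.support A (A ⧸ J) = PrimeSpectrum.zeroLocus J := by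
    rw [Module.support_eq_zeroLocus, hann]
  have hdim := Module.supportDim_le_supportDim_quotSMulTop_succ_of_mem_jacobson (M := A ⧸ J)
    (x := y) (Ideal.jacobson_mono bot_le hy)
  have hquot : Module.supportDim A (QuotSMulTop y (A ⧸ J)) ≤ 0 := by
    refine Order.krullDim_nonpos_iff_forall_isMax.2 fun p q hpq ↦ ?_
    obtain ⟨hp, hyp⟩ := (Module.support_quotSMulTop y).subset p.2
    have := h p.1 (hJ.subset hp) (Set.singleton_subset_iff.1 hyp)
    exact (this.eq_of_le q.1.2.ne_top hpq).ge
  rw [← hJ]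
  exact hdim.trans (by simpa using add_le_add_left hquot 1)

variable {R : Type u} [CommRing R] (I : Ideal R)

lemma isMaximal_of_isMaximal_comap_adicCompletion (hI : I.FG)
    {q : Ideal (AdicCompletion I R)} [q.IsPrime]
    (hIq : I ≤ q.comap (algebraMap R (AdicCompletion I R)))
    (hq : (q.comap (algebraMap R (AdicCompletion I R))).IsMaximal) :
    q.IsMaximal := by
  have := AdicCompletion.isMaximal_map_of_le I (q.comap (algebraMap R (AdicCompletion I R))) hIq hI
  rwa [← this.eq_of_le ‹q.IsPrime›.ne_top Ideal.map_comap_le]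

lemma isNoetherianRing_adicCompletion_span_singleton [IsNoetherianRing R] (y : R) :
    IsNoetherianRing (AdicCompletion (Ideal.span {y}) R) := by
  set I := Ideal.span {y} with hI
  have hmap : I.map (algebraMap R (AdicCompletion I R)) =
      Ideal.span {algebraMap R (AdicCompletion I R) y} := by
    rw [hI, Ideal.map_span, Set.image_singleton]
  have hcomplete := AdicCompletion.isAdicComplete_self I (Submodule.fg_span_singleton y)
  rw [hmap] at hcomplete
  have hker := AdicCompletion.ker_evalOneₐ_eq_map I (Submodule.fg_span_singleton y)
  rw [hmap] at hker
  have : IsNoetherianRing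
      (AdicCompletion I R ⧸ Ideal.span {algebraMap R (AdicCompletion I R) y}) := by
    rw [← hker]
    exact isNoetherianRing_of_ringEquiv (R ⧸ I)
      (RingHom.quotientKerEquivOfSurjective (AdicCompletion.evalOneₐ_surjective I)).symm
  exact isNoetherianRing_of_quotient_span_singleton (algebraMap R (AdicCompletion I R) y)

lemma subsingleton_of_subsingleton_adicCompletion_tensorProduct (K : Type*) [AddCommGroup K]
    [Module R K] (hK : I ≤ Module.annihilator R K) [Subsingleton (AdicCompletion I R ⊗[R] K)] :
    Subsingleton K := by
  have hsurj : Function.Surjective ((AdicCompletion.evalOneₐ I).toLinearMap.rTensor K) :=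
    LinearMap.rTensor_surjective K (AdicCompletion.evalOneₐ_surjective I)
  have : Subsingleton ((R ⧸ I) ⊗[R] K) := hsurj.subsingleton
  have : Subsingleton (K ⧸ (I • ⊤ : Submodule R K)) :=
    (TensorProduct.quotTensorEquivQuotSMul K I).symm.injective.subsingleton
  have hbot : (I • ⊤ : Submodule R K) = ⊥ :=
    Submodule.le_annihilator_iff.1 (hK.trans_eq Submodule.annihilator_top.symm)
  exact (Submodule.quotEquivOfEqBot _ hbot).symm.injective.subsingleton

end AdicCompletion

section DivisibleBaseChange

open scoped TensorProduct

variable {R : Type u} [CommRing R] {D : Type u} [AddCommGroup D] [Module R D] {y : R}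

lemma exists_pow_mem_annihilator [Module.Finite R D]
    (hD : Module.support R D ⊆ PrimeSpectrum.zeroLocus {y}) :
    ∃ n, y ^ n ∈ Module.annihilator R D := by
  rwa [Module.support_eq_zeroLocus, PrimeSpectrum.subset_zeroLocus_iff_subset_vanishingIdeal,
    PrimeSpectrum.vanishingIdeal_zeroLocus_eq_radical, Set.singleton_subset_iff] at hD

lemma subsingleton_of_surjective_lsmul [Module.Finite R D]
    (hD : Module.support R D ⊆ PrimeSpectrum.zeroLocus {y})
    (hy : Function.Surjective (LinearMap.lsmul R D y)) : Subsingleton D := by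
  obtain ⟨n, hn⟩ := exists_pow_mem_annihilator hD
  have hyn : Function.Surjective (y ^ n • · : D → D) := by
    rw [← smul_iterate]
    exact hy.iterate n
  refine subsingleton_of_forall_eq 0 (hyn.forall.2 fun d ↦ Module.mem_annihilator.1 hn d)

variable (R' : Type u) [CommRing R'] [Algebra R R']

lemma support_tensorProduct_subset_zeroLocus_singleton
    (hD : Module.support R D ⊆ PrimeSpectrum.zeroLocus {y}) :
    Module.support R' (R' ⊗[R] D) ⊆ PrimeSpectrum.zeroLocus {algebraMap R R' y} := by
  refine (support_tensorProduct_subset R' D).trans ((Set.preimage_mono hD).trans ?_)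
  rw [PrimeSpectrum.preimage_comap_zeroLocus, Set.image_singleton]

lemma coe_lsmul_tensorProduct (y : R) :
    ⇑(LinearMap.lsmul R' (R' ⊗[R] D) (algebraMap R R' y)) =
      (LinearMap.lsmul R D y).lTensor R' := by
  funext d
  have hy : LinearMap.lsmul R D y = y • LinearMap.id := rfl
  rw [hy, LinearMap.lTensor_smul, LinearMap.lTensor_id, LinearMap.lsmul_apply, algebraMap_smul]
  rfl

lemma surjective_lsmul_tensorProduct (hy : Function.Surjective (LinearMap.lsmul R D y)) :
    Function.Surjective (LinearMap.lsmul R' (R' ⊗[R] D) (algebraMap R R' y)) := by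
  rw [coe_lsmul_tensorProduct]
  exact LinearMap.lTensor_surjective R' hy

lemma subsingleton_tensorProduct_of_finite [Module.Finite R' (R' ⊗[R] D)]
    (hD : Module.support R D ⊆ PrimeSpectrum.zeroLocus {y})
    (hy : Function.Surjective (LinearMap.lsmul R D y)) : Subsingleton (R' ⊗[R] D) :=
  subsingleton_of_surjective_lsmul (support_tensorProduct_subset_zeroLocus_singleton R' hD)
    (surjective_lsmul_tensorProduct R' hy)

lemma exists_surjective_ker_lsmul_tensorProduct [Module.Flat R R'] (y : R) :
    ∃ f : R' ⊗[R] LinearMap.ker (LinearMap.lsmul R D y) →ₗ[R']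
      LinearMap.ker (LinearMap.lsmul R' (R' ⊗[R] D) (algebraMap R R' y)),
        Function.Surjective f := by
  have hexact : Function.Exact
      ((LinearMap.ker (LinearMap.lsmul R D y)).subtype.baseChange R')
      (LinearMap.lsmul R' (R' ⊗[R] D) (algebraMap R R' y)) := by
    rw [coe_lsmul_tensorProduct]
    exact Module.Flat.lTensor_exact R' (LinearMap.exact_subtype_ker_map _)
  refine ⟨LinearMap.codRestrict _ _ fun d ↦ hexact.apply_apply_eq_zero d, fun d ↦ ?_⟩
  obtain ⟨e, he⟩ := (hexact d).1 d.2
  exact ⟨e, Subtype.ext he⟩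

lemma algebraMap_mem_annihilator_tensorProduct {u : R} (hu : u ∈ Module.annihilator R D) :
    algebraMap R R' u ∈ Module.annihilator R' (R' ⊗[R] D) := by
  have hu : LinearMap.lsmul R D u = 0 := LinearMap.ext (Module.mem_annihilator.1 hu)
  refine Module.mem_annihilator.2 fun d ↦ (congr_fun (coe_lsmul_tensorProduct R' u) d).trans ?_
  rw [hu, LinearMap.lTensor_zero, LinearMap.zero_apply]

lemma exists_mem_annihilator_tensorProduct [Module.Flat R R'] [IsNoetherianRing R']
    [IsAdicComplete (Ideal.span {algebraMap R R' y}) R']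
    (hR' : ∀ q : PrimeSpectrum R', y ∈ q.asIdeal.comap (algebraMap R R') →
      (q.asIdeal.comap (algebraMap R R')).IsMaximal → q.asIdeal.IsMaximal)
    (hD : Module.support R D ⊆ PrimeSpectrum.zeroLocus {y})
    (hy : Function.Surjective (LinearMap.lsmul R D y))
    [Module.Finite R (LinearMap.ker (LinearMap.lsmul R D y))] {I : Ideal R} {u : R}
    (hu : u ∈ Module.annihilator R (LinearMap.ker (LinearMap.lsmul R D y)))
    (h : ∀ q : PrimeSpectrum R, I ≤ q.asIdeal → y ∈ q.asIdeal → u ∈ q.asIdeal →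
      q.asIdeal.IsMaximal) :
    ∃ z ∈ Module.annihilator R' (R' ⊗[R] D), Order.krullDim (PrimeSpectrum.zeroLocus
      ((I.map (algebraMap R R') ⊔ Ideal.span {z} : Ideal R') : Set R')) ≤ 1 := by
  obtain ⟨f, hf⟩ := exists_surjective_ker_lsmul_tensorProduct (D := D) R' y
  have := Module.Finite.of_surjective f hf
  obtain ⟨z, hz, n, hzn⟩ := exists_mem_annihilator_sub_pow_mem
    (support_tensorProduct_subset_zeroLocus_singleton R' hD)
    (surjective_lsmul_tensorProduct R' hy)
    (f.annihilator_le_of_surjective hf (algebraMap_mem_annihilator_tensorProduct R' hu))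
  have hjac := IsAdicComplete.le_jacobson_bot (Ideal.span {algebraMap R R' y})
    (Ideal.mem_span_singleton_self _)
  refine ⟨z, hz, krullDim_zeroLocus_le_one hjac fun q hIq hyq ↦ ?_⟩
  obtain ⟨hIq, hzq⟩ := sup_le_iff.1 hIq
  refine hR' q hyq (h (PrimeSpectrum.comap (algebraMap R R') q) (Ideal.map_le_iff_le_comap.1 hIq)
    hyq (q.2.mem_of_pow_mem n ?_))
  have hdiff := (Ideal.span_singleton_le_iff_mem q.asIdeal).2 hyq hzn
  have := q.asIdeal.add_mem hdiff ((Ideal.span_singleton_le_iff_mem _).1 hzq)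
  rwa [sub_add_cancel] at this

end DivisibleBaseChange

section IsoModFinite

open scoped TensorProduct

section Serre

variable {R : Type u} [CommRing R] {M₁ M₂ : Type u} [AddCommGroup M₁] [Module R M₁]
  [AddCommGroup M₂] [Module R M₂] (T : ObjectProperty (ModuleCat.{u} R)) [T.IsSerreClass]

lemma isoModSerre_lsmul_iff {f : M₁ →ₗ[R] M₂} (hf : T.isoModSerre (ModuleCat.ofHom f)) (x : R) :
    T.isoModSerre (ModuleCat.ofHom (LinearMap.lsmul R M₁ x)) ↔
      T.isoModSerre (ModuleCat.ofHom (LinearMap.lsmul R M₂ x)) := by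
  have hcomm : ModuleCat.ofHom (LinearMap.lsmul R M₁ x) ≫ ModuleCat.ofHom f =
      ModuleCat.ofHom f ≫ ModuleCat.ofHom (LinearMap.lsmul R M₂ x) := by
    ext m
    exact map_smul f x m
  rw [← T.isoModSerre.postcomp_iff _ _ hf, hcomm, T.isoModSerre.precomp_iff _ _ hf]

lemma isoModSerre_lsmul_iff_of_mem_annihilator {x : R} (hx : x ∈ Module.annihilator R M₁) :
    T.isoModSerre (ModuleCat.ofHom (LinearMap.lsmul R M₁ x)) ↔ T (ModuleCat.of R M₁) := by
  have hx : LinearMap.lsmul R M₁ x = 0 := LinearMap.ext (Module.mem_annihilator.1 hx)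
  rw [hx]
  exact (T.isoModSerre_zero_iff _ _).trans (and_self_iff)

lemma prop_iff_of_isoModSerre {f : M₁ →ₗ[R] M₂} (hf : T.isoModSerre (ModuleCat.ofHom f)) :
    T (ModuleCat.of R M₁) ↔ T (ModuleCat.of R M₂) := by
  rw [← isoModSerre_lsmul_iff_of_mem_annihilator T (zero_mem (Module.annihilator R M₁)),
    isoModSerre_lsmul_iff T hf, isoModSerre_lsmul_iff_of_mem_annihilator T (zero_mem _)]

lemma isoModSerre_mkQ {N : Submodule R M₁} (hN : T (ModuleCat.of R N)) :
    T.isoModSerre (ModuleCat.ofHom N.mkQ) := by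
  rw [isoModSerre_ofHom_iff, N.ker_mkQ, N.range_mkQ]
  exact ⟨hN, prop_of_subsingleton T⟩

lemma isoModSerre_subtype {N : Submodule R M₁} (hN : T (ModuleCat.of R (M₁ ⧸ N))) :
    T.isoModSerre (ModuleCat.ofHom N.subtype) := by
  rw [isoModSerre_ofHom_iff, N.ker_subtype, N.range_subtype]
  exact ⟨prop_of_subsingleton T, hN⟩

end Serre

section BaseChange

variable {R : Type u} [CommRing R] (R' : Type u) [CommRing R'] [Algebra R R'] {M₁ M₂ : Type u}
  [AddCommGroup M₁] [Module R M₁] [AddCommGroup M₂] [Module R M₂]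

lemma isoModSerre_baseChange [IsNoetherianRing R] [IsNoetherianRing R'] [Module.Flat R R']
    {f : M₁ →ₗ[R] M₂} (hf : (ModuleCat.isFG R).isoModSerre (ModuleCat.ofHom f)) :
    (ModuleCat.isFG R').isoModSerre (ModuleCat.ofHom (f.baseChange R')) := by
  obtain ⟨hker, hcoker⟩ := (isoModSerre_ofHom_iff _ f).1 hf
  have : Module.Finite R (LinearMap.ker f) := hker
  have : Module.Finite R (M₂ ⧸ LinearMap.range f) := hcoker
  exact isoModSerre_of_exact (ModuleCat.isFG R')
    (f := (LinearMap.ker f).subtype.baseChange R') (g := (LinearMap.range f).mkQ.baseChange R')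
    (Module.Flat.lTensor_exact R' (LinearMap.exact_subtype_ker_map f))
    (Module.Flat.lTensor_exact R' (LinearMap.exact_map_mkQ_range f))
    (inferInstanceAs (Module.Finite R' (R' ⊗[R] LinearMap.ker f)))
    (inferInstanceAs (Module.Finite R' (R' ⊗[R] (M₂ ⧸ LinearMap.range f))))

end BaseChange

section DivisiblePart

variable {R : Type u} [CommRing R] {Y : Type u} [AddCommGroup Y] [Module R Y] {y : R}

lemma exists_add_pow_smul_eq {F : Submodule R Y}
    (hF : F ⊔ LinearMap.range (LinearMap.lsmul R Y y) = ⊤) (k : ℕ) (m : Y) :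
    ∃ v ∈ F, ∃ w : Y, v + y ^ k • w = m := by
  induction k with
  | zero => exact ⟨0, F.zero_mem, m, by rw [pow_zero, one_smul, zero_add]⟩
  | succ k ih =>
    obtain ⟨v, hv, w, rfl⟩ := ih
    obtain ⟨v', hv', _, ⟨w, rfl⟩, rfl⟩ := Submodule.mem_sup.1 (hF.ge (Submodule.mem_top (x := w)))
    refine ⟨v + y ^ k • v', F.add_mem hv (F.smul_mem _ hv'), w, ?_⟩
    rw [LinearMap.lsmul_apply, smul_add, ← mul_smul, ← pow_succ, add_assoc]

/-- If `F` is a finitely generated submodule with `Y = F + y Y` and `y ^ c F = 0`, then `y ^ c Y` is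
divisible by `y` and `Y / y ^ c Y` is a quotient of `F`. -/
lemma exists_submodule_surjective_lsmul (hY : Module.support R Y ⊆ PrimeSpectrum.zeroLocus {y})
    [Module.Finite R (Y ⧸ LinearMap.range (LinearMap.lsmul R Y y))] :
    ∃ D : Submodule R Y, Function.Surjective (LinearMap.lsmul R D y) ∧ Module.Finite R (Y ⧸ D) := by
  obtain ⟨F, hF, hFtop⟩ : ∃ F : Submodule R Y, F.FG ∧
      F ⊔ LinearMap.range (LinearMap.lsmul R Y y) = ⊤ := by
    obtain ⟨F, hF, hFmap⟩ := exists_fg_map_eq (g := Submodule.mkQ _) Module.Finite.fg_top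
      (Submodule.range_mkQ (LinearMap.range (LinearMap.lsmul R Y y))).ge
    exact ⟨F, hF, by rwa [Submodule.map_mkQ_eq_top, sup_comm] at hFmap⟩
  have : Module.Finite R F := Module.Finite.iff_fg.2 hF
  obtain ⟨c, hcF⟩ := exists_pow_mem_annihilator (D := F)
    ((Module.support_subset_of_injective _ F.injective_subtype).trans hY)
  have hc (v : Y) (hv : v ∈ F) : y ^ c • v = 0 :=
    congr_arg Subtype.val (Module.mem_annihilator.1 hcF ⟨v, hv⟩)
  refine ⟨LinearMap.range (LinearMap.lsmul R Y (y ^ c)), ?_, ?_⟩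
  · rintro ⟨_, m, rfl⟩
    obtain ⟨v, hv, w, rfl⟩ := exists_add_pow_smul_eq hFtop 1 m
    refine ⟨⟨_, w, rfl⟩, Subtype.ext ?_⟩
    change y • y ^ c • w = y ^ c • (v + y ^ 1 • w)
    rw [smul_add, hc v hv, zero_add, pow_one, smul_comm]
  · refine .of_surjective ((LinearMap.range (LinearMap.lsmul R Y (y ^ c))).mkQ ∘ₗ F.subtype) ?_
    refine (Submodule.mkQ_surjective _).forall.2 fun m ↦ ?_
    obtain ⟨v, hv, w, rfl⟩ := exists_add_pow_smul_eq hFtop c m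
    refine ⟨⟨v, hv⟩, ((Submodule.Quotient.eq _).2 ⟨-w, ?_⟩)⟩
    rw [LinearMap.lsmul_apply, smul_neg, F.subtype_apply, sub_add_cancel_left]

end DivisiblePart

end IsoModFinite

section NonmaximalPrimes

open scoped TensorProduct

lemma krullDim_le_of_forall_exists_gt {α : Type*} [Preorder α] {A B : Set α} {n : ℕ}
    (hBA : B ⊆ A) (h : ∀ b ∈ B, ∃ a ∈ A, b < a) (hA : Order.krullDim A ≤ (n + 1 : ℕ)) :
    Order.krullDim B ≤ n := by
  rw [← Order.krullDim_orderDual] at hA ⊢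
  exact krullDim_le_of_forall_exists_lt (α := αᵒᵈ) hBA h hA

variable {R : Type u} [CommRing R]

lemma krullDim_support_tensorProduct_localizationAtPrime_le {M : Type u} [AddCommGroup M]
    [Module R M] {n : ℕ} (hM : Order.krullDim (Module.support R M) ≤ (n + 1 : ℕ)) {p : Ideal R}
    [p.IsPrime] (hp : ¬p.IsMaximal) :
    Order.krullDim (Module.support (Localization.AtPrime p)
      (Localization.AtPrime p ⊗[R] M)) ≤ n := by
  obtain ⟨m, hm, hpm⟩ := p.exists_le_maximal (Ideal.IsPrime.ne_top ‹_›)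
  have hlt : p < m := lt_of_le_of_ne hpm (by rintro rfl; exact hp hm)
  let f : PrimeSpectrum (Localization.AtPrime p) → PrimeSpectrum R :=
    PrimeSpectrum.comap (algebraMap R (Localization.AtPrime p))
  have hf : StrictMono f := Monotone.strictMono_of_injective (fun _ _ h ↦ Ideal.comap_mono h)
    (PrimeSpectrum.localization_comap_injective _ p.primeCompl)
  have hfp (q) : (f q).asIdeal ≤ p :=
    (Ideal.comap_mono (IsLocalRing.le_maximalIdeal q.2.ne_top)).trans
      Localization.AtPrime.under_maximalIdeal.le
  have hfM : f '' Module.support _ (Localization.AtPrime p ⊗[R] M) ⊆ Module.support R M :=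
    Set.image_subset_iff.2 (support_tensorProduct_subset _ M)
  refine (Order.krullDim_le_of_strictMono (Set.imageFactorization f _) fun _ _ h ↦ hf h).trans
    (krullDim_le_of_forall_exists_gt hfM ?_ hM)
  rintro _ ⟨q, hq, rfl⟩
  have hqm : f q < ⟨m, hm.isPrime⟩ := lt_of_le_of_lt (b := ⟨p, ‹_›⟩) (hfp q) hlt
  exact ⟨_, Module.mem_support_mono hqm.le (hfM ⟨q, hq, rfl⟩), hqm⟩

lemma isMaximal_of_lt_of_krullDim_zeroLocus_le_one {J : Ideal R}
    (hJ : Order.krullDim (PrimeSpectrum.zeroLocus (J : Set R)) ≤ 1) {p q : PrimeSpectrum R}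
    (hp : J ≤ p.asIdeal) (hpq : p < q) : q.asIdeal.IsMaximal := by
  let B : Set (PrimeSpectrum R) := {q | ∃ p ∈ PrimeSpectrum.zeroLocus (J : Set R), p < q}
  have hBJ : B ⊆ PrimeSpectrum.zeroLocus (J : Set R) := fun q ⟨p, hp, hpq⟩ ↦
    le_trans (b := p.asIdeal) hp hpq.le
  have hB : Order.krullDim B ≤ (0 : ℕ) := krullDim_le_of_forall_exists_lt hBJ (fun _ hq ↦ hq) hJ
  have hq : q ∈ B := ⟨p, hp, hpq⟩
  obtain ⟨m, hm, hqm⟩ := q.asIdeal.exists_le_maximal q.2.ne_top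
  have hm' : ⟨m, hm.isPrime⟩ ∈ B := ⟨p, hp, hpq.trans_le hqm⟩
  have hmq : m ≤ q.asIdeal :=
    Order.krullDim_nonpos_iff_forall_isMax.1 hB ⟨q, hq⟩ (show _ ≤ (⟨_, hm'⟩ : B) from hqm)
  rwa [hqm.antisymm hmq]

lemma exists_mem_annihilator_forall_isMaximal [IsNoetherianRing R] {K : Type*} [AddCommGroup K]
    [Module R K] [Module.Finite R K] {J : Ideal R}
    (hJ : Order.krullDim (PrimeSpectrum.zeroLocus (J : Set R)) ≤ 1)
    (hK : ∀ p ∈ Module.support R K, p.asIdeal.IsMaximal) :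
    ∃ u ∈ Module.annihilator R K,
      ∀ q : PrimeSpectrum R, J ≤ q.asIdeal → u ∈ q.asIdeal → q.asIdeal.IsMaximal := by
  have havoid : ¬(Module.annihilator R K : Set R) ⊆
      ⋃ P ∈ {P ∈ J.minimalPrimes | ¬P.IsMaximal}, (P : Set R) := by
    rw [Ideal.subset_union_prime_finite (J.finite_minimalPrimes_of_isNoetherianRing.subset
      (Set.sep_subset _ _)) ⊥ ⊥ fun P hP _ _ ↦ hP.1.1.1]
    rintro ⟨P, ⟨hPJ, hP⟩, hKP⟩
    exact hP (hK ⟨P, hPJ.1.1⟩ (Module.support_eq_zeroLocus (R := R) (M := K) ▸ hKP))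
  obtain ⟨u, hu, huP⟩ := Set.not_subset.1 havoid
  refine ⟨u, hu, fun q hJq huq ↦ ?_⟩
  obtain ⟨P, hPJ, hPq⟩ := Ideal.exists_minimalPrimes_le hJq
  obtain rfl | hlt := hPq.eq_or_lt
  · exact by_contra fun hP ↦ huP (Set.mem_iUnion₂.2 ⟨_, ⟨hPJ, hP⟩, huq⟩)
  · exact isMaximal_of_lt_of_krullDim_zeroLocus_le_one (p := ⟨P, hPJ.1.1⟩) hJ hPJ.1.2 hlt

end NonmaximalPrimes

section DimensionTwo

open scoped TensorProduct

variable {R : Type u} [CommRing R] {M : Type u} [AddCommGroup M] [Module R M]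

lemma exists_submodule_quotient_surjective_lsmul [IsNoetherianRing R] {X : Type u} [AddCommGroup X]
    [Module R X] {y : R}
    (h : (ModuleCat.isFG R).isoModSerre (ModuleCat.ofHom (LinearMap.lsmul R X y)))
    {N : Submodule R X} [Module.Finite R N]
    (hN : Module.support R (X ⧸ N) ⊆ PrimeSpectrum.zeroLocus {y}) :
    ∃ D : Submodule R (X ⧸ N), Module.Finite R ((X ⧸ N) ⧸ D) ∧
      Function.Surjective (LinearMap.lsmul R D y) ∧
        Module.Finite R (LinearMap.ker (LinearMap.lsmul R D y)) := by
  rw [isoModSerre_lsmul_iff _ (isoModSerre_mkQ (ModuleCat.isFG R) (N := N) ‹_›)] at h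
  have hcoker : Module.Finite R ((X ⧸ N) ⧸ LinearMap.range (LinearMap.lsmul R (X ⧸ N) y)) :=
    ((isoModSerre_ofHom_iff _ _).1 h).2
  obtain ⟨D, hy, hD⟩ := exists_submodule_surjective_lsmul hN
  rw [← isoModSerre_lsmul_iff _ (isoModSerre_subtype (ModuleCat.isFG R) hD)] at h
  exact ⟨D, hD, hy, ((isoModSerre_ofHom_iff _ _).1 h).1⟩

lemma subsingleton_of_subsingleton_tensorProduct_adicCompletion [IsNoetherianRing R] {D : Type u}
    [AddCommGroup D] [Module R D] {y : R} (hD : Module.support R D ⊆ PrimeSpectrum.zeroLocus {y})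
    [Subsingleton (AdicCompletion (Ideal.span {y}) R ⊗[R] D)] : Subsingleton D := by
  have : Module.Flat R (AdicCompletion (Ideal.span {y}) R) := AdicCompletion.flat_of_isNoetherian _
  have hinj := Module.Flat.lTensor_preserves_injective_linearMap
    (M := AdicCompletion (Ideal.span {y}) R) _
    (LinearMap.ker (LinearMap.lsmul R D y)).injective_subtype
  have := hinj.subsingleton
  have hann : Ideal.span {y} ≤ Module.annihilator R (LinearMap.ker (LinearMap.lsmul R D y)) :=
    (Ideal.span_singleton_le_iff_mem _).2 (Module.mem_annihilator.2 fun d ↦ Subtype.ext d.2)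
  have := subsingleton_of_subsingleton_adicCompletion_tensorProduct _ _ hann
  have hy : Function.Injective (LinearMap.lsmul R D y) :=
    LinearMap.ker_eq_bot.1 ((Submodule.subsingleton_iff_eq_bot).1 this)
  refine subsingleton_of_forall_eq 0 fun d ↦ ?_
  obtain ⟨n, hn⟩ := support_subset_zeroLocus_iff.1 hD y rfl d
  have hyn : Function.Injective (y ^ n • · : D → D) := by
    rw [← smul_iterate]
    exact hy.iterate n
  exact hyn (hn.trans (smul_zero _).symm)

lemma finite_localizationAtPrime_tensorProduct_extModule [IsNoetherianRing R] {a : Ideal R}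
    (hM : Module.support R M ⊆ PrimeSpectrum.zeroLocus a)
    (hdim : Order.krullDim (Module.support R M) ≤ 2)
    (h : ∀ i ≤ 1, Module.Finite R (ExtModule R (R ⧸ a) M i)) (i : ℕ) {p : Ideal R} [p.IsPrime]
    (hp : ¬p.IsMaximal) :
    Module.Finite (Localization.AtPrime p)
      (Localization.AtPrime p ⊗[R] ExtModule R (R ⧸ a) M i) := by
  obtain ⟨e⟩ := nonempty_tensorProduct_extModule_quotient_equiv (Localization.AtPrime p) M a i
  have := finite_extModule_of_krullDim_le_one
    (support_tensorProduct_subset_zeroLocus (Localization.AtPrime p) hM)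
    (krullDim_support_tensorProduct_localizationAtPrime_le (n := 1) hdim hp)
    (fun i hi ↦ finite_extModule_tensorProduct _ M (h i hi)) i
  exact Module.Finite.equiv e.symm

section Zigzag

variable [IsNoetherianRing R] {X Y D : Type u} [AddCommGroup X] [Module R X] [AddCommGroup Y]
  [Module R Y] [AddCommGroup D] [Module R D] {f : X →ₗ[R] Y} {g : D →ₗ[R] Y} {y : R}
  (hf : (ModuleCat.isFG R).isoModSerre (ModuleCat.ofHom f))
  (hg : (ModuleCat.isFG R).isoModSerre (ModuleCat.ofHom g))
  (hD : Module.support R D ⊆ PrimeSpectrum.zeroLocus {y})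
  (hy : Function.Surjective (LinearMap.lsmul R D y))

include hf hg hD hy

lemma isMaximal_of_mem_support
    (hX : ∀ (p : Ideal R) [p.IsPrime], ¬p.IsMaximal →
      Module.Finite (Localization.AtPrime p) (Localization.AtPrime p ⊗[R] X))
    {p : PrimeSpectrum R} (hp : p ∈ Module.support R D) : p.asIdeal.IsMaximal := by
  by_contra hmax
  let A := Localization.AtPrime p.asIdeal
  have hXfin : Module.Finite A (A ⊗[R] X) := hX _ hmax
  have hYfin := (prop_iff_of_isoModSerre _ (isoModSerre_baseChange A hf)).1 hXfin
  have hDfin : Module.Finite A (A ⊗[R] D) :=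
    (prop_iff_of_isoModSerre _ (isoModSerre_baseChange A hg)).2 hYfin
  have := subsingleton_tensorProduct_of_finite A hD hy
  have := (LocalizedModule.equivTensorProduct p.asIdeal.primeCompl D).injective.subsingleton
  exact not_nontrivial _ hp

lemma subsingleton_tensorProduct_of_mem_annihilator (R' : Type u) [CommRing R']
    [IsNoetherianRing R'] [Algebra R R'] [Module.Flat R R'] {z : R'}
    (hz : z ∈ Module.annihilator R' (R' ⊗[R] D))
    (hX : (ModuleCat.isFG R').isoModSerre (ModuleCat.ofHom (LinearMap.lsmul R' (R' ⊗[R] X) z))) :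
    Subsingleton (R' ⊗[R] D) := by
  have hY := (isoModSerre_lsmul_iff _ (isoModSerre_baseChange R' hf) z).1 hX
  have hDz := (isoModSerre_lsmul_iff _ (isoModSerre_baseChange R' hg) z).2 hY
  have : Module.Finite R' (R' ⊗[R] D) := (isoModSerre_lsmul_iff_of_mem_annihilator _ hz).1 hDz
  exact subsingleton_tensorProduct_of_finite R' hD hy

end Zigzag

lemma isoModSerre_lsmul_tensorProduct_extModule [IsNoetherianRing R] {a I : Ideal R}
    (ha : Module.support R M ⊆ PrimeSpectrum.zeroLocus a)
    (hI : Module.support R M ⊆ PrimeSpectrum.zeroLocus I)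
    (h : ∀ i ≤ 2, Module.Finite R (ExtModule R (R ⧸ a) M i)) (i : ℕ)
    {R' : Type u} [CommRing R'] [IsNoetherianRing R'] [Algebra R R'] [Module.Flat R R'] {z : R'}
    (hz : Order.krullDim (PrimeSpectrum.zeroLocus
      ((I.map (algebraMap R R') ⊔ Ideal.span {z} : Ideal R') : Set R')) ≤ 1) :
    (ModuleCat.isFG R').isoModSerre
      (ModuleCat.ofHom (LinearMap.lsmul R' (R' ⊗[R] ExtModule R (R ⧸ a) M i) z)) := by
  have hsub : Module.support R' (R' ⊗[R] M) ∩ PrimeSpectrum.zeroLocus {z} ⊆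
      PrimeSpectrum.zeroLocus (I.map (algebraMap R R') ⊔ Ideal.span {z} : Ideal R') := by
    rw [PrimeSpectrum.zeroLocus_sup, PrimeSpectrum.zeroLocus_span]
    exact Set.inter_subset_inter_left _ (support_tensorProduct_subset_zeroLocus R' hI)
  have hExt := isoModSerre_lsmul_extModule (support_tensorProduct_subset_zeroLocus R' ha)
    ((krullDim_le_of_subset hsub).trans hz)
    (fun i hi ↦ finite_extModule_tensorProduct R' M (h i hi)) i
  obtain ⟨e⟩ := nonempty_tensorProduct_extModule_quotient_equiv R' M a i
  have he : (ModuleCat.isFG R').isoModSerre (ModuleCat.ofHom e.toLinearMap) :=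
    (ModuleCat.isFG R').isoModSerre_of_isIso e.toModuleIso.hom
  exact (isoModSerre_lsmul_iff _ he z).2 hExt

lemma subsingleton_of_krullDim_le_two [IsNoetherianRing R] {a I : Ideal R}
    (ha : Module.support R M ⊆ PrimeSpectrum.zeroLocus a)
    (hI : Module.support R M = PrimeSpectrum.zeroLocus I)
    (hdim : Order.krullDim (Module.support R M) ≤ 2)
    (h : ∀ i ≤ 2, Module.Finite R (ExtModule R (R ⧸ a) M i)) {i : ℕ} {y : R}
    (hdimy : Order.krullDim ↥(Module.support R M ∩ PrimeSpectrum.zeroLocus {y}) ≤ 1)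
    {Y D : Type u} [AddCommGroup Y] [Module R Y] [AddCommGroup D] [Module R D]
    {f : ExtModule R (R ⧸ a) M i →ₗ[R] Y} {g : D →ₗ[R] Y}
    (hf : (ModuleCat.isFG R).isoModSerre (ModuleCat.ofHom f))
    (hg : (ModuleCat.isFG R).isoModSerre (ModuleCat.ofHom g))
    (hD : Module.support R D ⊆ PrimeSpectrum.zeroLocus {y})
    (hy : Function.Surjective (LinearMap.lsmul R D y))
    [Module.Finite R (LinearMap.ker (LinearMap.lsmul R D y))] : Subsingleton D := by
  have hJ : Order.krullDim (PrimeSpectrum.zeroLocus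
      ((I ⊔ Ideal.span {y} : Ideal R) : Set R)) ≤ 1 := by
    rwa [PrimeSpectrum.zeroLocus_sup, PrimeSpectrum.zeroLocus_span, ← hI]
  obtain ⟨u, hu, hmax⟩ := exists_mem_annihilator_forall_isMaximal hJ
    (K := LinearMap.ker (LinearMap.lsmul R D y)) fun p hp ↦
      isMaximal_of_mem_support hf hg hD hy
        (fun p _ ↦ finite_localizationAtPrime_tensorProduct_extModule ha hdim
          (fun i hi ↦ h i (hi.trans one_le_two)) i)
        (Module.support_subset_of_injective _ (Submodule.injective_subtype _) hp)
  have hfg := Submodule.fg_span_singleton (R := R) y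
  have := isNoetherianRing_adicCompletion_span_singleton y
  have := AdicCompletion.flat_of_isNoetherian (Ideal.span {y})
  have : IsAdicComplete (Ideal.span {algebraMap R (AdicCompletion (Ideal.span {y}) R) y})
      (AdicCompletion (Ideal.span {y}) R) := by
    simpa only [Ideal.map_span, Set.image_singleton] using
      AdicCompletion.isAdicComplete_self (Ideal.span {y}) hfg
  obtain ⟨z, hz, hdimz⟩ := exists_mem_annihilator_tensorProduct
    (AdicCompletion (Ideal.span {y}) R) (I := I) (fun q hyq hq ↦
      isMaximal_of_isMaximal_comap_adicCompletion _ hfg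
        ((Ideal.span_singleton_le_iff_mem _).2 hyq) hq) hD hy hu fun q hIq hyq huq ↦
      hmax q (sup_le hIq ((Ideal.span_singleton_le_iff_mem _).2 hyq)) huq
  have := subsingleton_tensorProduct_of_mem_annihilator hf hg hD hy _ hz
    (isoModSerre_lsmul_tensorProduct_extModule ha hI.le h i hdimz)
  exact subsingleton_of_subsingleton_tensorProduct_adicCompletion hD

lemma finite_extModule_of_krullDim_le_two [IsNoetherianRing R] {a : Ideal R}
    (hM : Module.support R M ⊆ PrimeSpectrum.zeroLocus a)
    (hdim : Order.krullDim (Module.support R M) ≤ 2)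
    (h : ∀ i ≤ 2, Module.Finite R (ExtModule R (R ⧸ a) M i)) (i : ℕ) :
    Module.Finite R (ExtModule R (R ⧸ a) M i) := by
  have hfin : Module.Finite R (Submodule.torsionBySet R M a) :=
    (prop_extModule_zero_iff (ModuleCat.isFG R)).1 (h 0 zero_le_two)
  obtain ⟨I, hI⟩ : ∃ I : Ideal R, Module.support R M = PrimeSpectrum.zeroLocus I :=
    ⟨_, by rw [← support_torsionBySet R M (IsNoetherian.noetherian a) hM,
      Module.support_eq_zeroLocus]⟩
  obtain ⟨y, hyI, N, hN, hyN⟩ := genericallyFiniteModules_extModule hM hI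
    (fun i hi ↦ h i (hi.trans one_le_two)) i
  have hdimy : Order.krullDim ↥(Module.support R M ∩ PrimeSpectrum.zeroLocus {y}) ≤ 1 :=
    krullDim_le_of_minimalPrimesCompl (n := 1) (hI ▸ hdim) (Set.inter_subset_left.trans hI.le)
      fun p hp ↦ ⟨y, hyI, hp.2 rfl⟩
  have hNfin : Module.Finite R N := Module.Finite.iff_fg.2 hN
  have hsupp : Module.support R (ExtModule R (R ⧸ a) M i ⧸ N) ⊆ PrimeSpectrum.zeroLocus {y} := by
    rw [support_subset_zeroLocus_iff]
    rintro _ rfl v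
    obtain ⟨m, rfl⟩ := N.mkQ_surjective v
    obtain ⟨k, hk⟩ := hyN m
    exact ⟨k, (Submodule.Quotient.mk_eq_zero N).2 hk⟩
  obtain ⟨D, hYD, hy, hker⟩ := exists_submodule_quotient_surjective_lsmul
    (isoModSerre_lsmul_extModule hM hdimy h i) hsupp
  have hD : Subsingleton D := subsingleton_of_krullDim_le_two hM hI hdim h hdimy
    (isoModSerre_mkQ _ hNfin) (isoModSerre_subtype _ hYD)
    ((Module.support_subset_of_injective _ D.injective_subtype).trans hsupp) hy
  rw [Submodule.subsingleton_iff_eq_bot] at hD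
  have := Module.Finite.equiv (D.quotEquivOfEqBot hD)
  exact Module.Finite.of_submodule_quotient N

end DimensionTwo

section ExtComparison

open Abelian

universe v w

variable {R : Type*} [CommRing R] {C : Type*} [Category.{v} C] [Abelian C] [Linear R C]
  [HasExt.{w} C] {X : C} (P : ProjectiveResolution X) {Y : C} {n : ℕ}

lemma smul_extMk (r : R) (f : P.complex.X n ⟶ Y) (m : ℕ) (hm : n + 1 = m)
    (hf : P.complex.d m n ≫ f = 0) :
    r • P.extMk f m hm hf =
      P.extMk (r • f) m hm (by rw [Linear.comp_smul, hf, smul_zero]) := by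
  have h := P.extMk_comp_mk₀ f m hm hf (r • 𝟙 Y)
  rw [Ext.mk₀_smul, Ext.comp_smul, Ext.comp_mk₀_id] at h
  simpa only [Linear.comp_smul, Category.comp_id] using h

lemma extMk_eq_zero_iff_exists_d_prev (f : P.complex.X n ⟶ Y) (m : ℕ) (hm : n + 1 = m)
    (hf : P.complex.d m n ≫ f = 0) :
    P.extMk f m hm hf = 0 ↔ ∃ g, P.complex.d n ((ComplexShape.up ℕ).prev n) ≫ g = f := by
  cases n with
  | zero =>
    have hd : P.cochainComplex.d (-(0 : ℕ)) 1 = 0 :=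
      (P.cochainComplex.isZero_of_isStrictlyLE 0 1 one_pos).eq_of_tgt _ _
    rw [← P.extEquivCohomologyClass.apply_eq_iff_eq, P.extEquivCohomologyClass_extMk,
      P.extEquivCohomologyClass_zero, CochainComplex.HomComplex.CohomologyClass.mk_eq_zero_iff,
      CochainComplex.HomComplex.Cocycle.toSingleMk_mem_coboundaries_iff _ _ _ _ _ 1 (by simp), hd,
      CochainComplex.prev_nat_zero, P.complex.shape 0 0 (by simp)]
    simp only [Limits.zero_comp, exists_const, eq_comm (a := (0 : _ ⟶ Y)),
      Preadditive.IsIso.comp_left_eq_zero]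
  | succ n =>
    rw [CochainComplex.prev_nat_succ]
    exact P.extMk_eq_zero_iff f m hm hf n rfl

variable (R Y n) in
/-- The map sending an `n`-cocycle of `Hom(P, Y)` to its class in `Ext^n(X, Y)`; it presents
`Abelian.Ext` as the cohomology of `Hom(P, Y)`, which computes the derived functor `Ext`. -/
noncomputable def extMkLinearMap :
    LinearMap.ker ((P.complex.linearYonedaObj R Y).sc n).g.hom →ₗ[R] Ext X Y n where
  toFun f := P.extMk f.1 ((ComplexShape.up ℕ).next n) (by simp) f.2
  map_add' f g := (P.add_extMk f.1 g.1 _ _ f.2 g.2).symm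
  map_smul' r f := (smul_extMk P r f.1 _ _ f.2).symm

variable [EnoughProjectives C]

variable (R X Y n) in
lemma nonempty_ext_linearEquiv :
    Nonempty (((Ext R C n).obj (Opposite.op X)).obj Y ≃ₗ[R] Abelian.Ext X Y n) := by
  let P : ProjectiveResolution X := ProjectiveResolution.of X
  let S := (P.complex.linearYonedaObj R Y).sc n
  have hker : LinearMap.range S.moduleCatToCycles = LinearMap.ker (extMkLinearMap R P Y n) := by
    ext f
    refine Iff.trans ⟨?_, ?_⟩ (extMk_eq_zero_iff_exists_d_prev P f.1 _ (by simp) f.2).symm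
    · rintro ⟨g, rfl⟩
      exact ⟨g, rfl⟩
    · rintro ⟨g, hg⟩
      exact ⟨g, Subtype.ext hg⟩
  have hsurj : Function.Surjective (extMkLinearMap R P Y n) := fun x ↦ by
    obtain ⟨f, hf, hx⟩ := P.extMk_surjective x ((ComplexShape.up ℕ).next n) (by simp)
    exact ⟨⟨f, hf⟩, hx⟩
  exact ⟨((P.isoExt n Y ≪≫ S.moduleCatHomologyIso).toLinearEquiv.trans
    (Submodule.quotEquivOfEq _ _ hker)).trans (LinearMap.quotKerEquivOfSurjective _ hsurj)⟩

end ExtComparison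

lemma finite_extQuot_iff {R : Type u} [CommRing R] {a : Ideal R} {i : ℕ} {M : ModuleCat.{u} R} :
    Module.Finite R (extQuot a i M) ↔ Module.Finite R (ExtModule R (R ⧸ a) M i) := by
  obtain ⟨e⟩ := nonempty_ext_linearEquiv R (ModuleCat.of R (R ⧸ a)) M i
  exact Module.Finite.equiv_iff e

section FD

variable {R : Type u} [CommRing R] [IsNoetherianRing R] {M : Type u} [AddCommGroup M] [Module R M]
  {a : Ideal R} {n : ℕ}

lemma finite_extModule_of_krullDim_le (hn : n ≤ 2)
    (hM : Module.support R M ⊆ PrimeSpectrum.zeroLocus a)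
    (hdim : Order.krullDim (Module.support R M) ≤ (n : WithBot (WithTop ℕ)))
    (h : ∀ i ≤ n, Module.Finite R (ExtModule R (R ⧸ a) M i)) (i : ℕ) :
    Module.Finite R (ExtModule R (R ⧸ a) M i) := by
  interval_cases n
  · exact finite_extModule_of_krullDim_nonpos hM hdim h i
  · exact finite_extModule_of_krullDim_le_one hM hdim h i
  · exact finite_extModule_of_krullDim_le_two hM hdim h i

lemma finite_extModule_quotient_iff (N : Submodule R M) [Module.Finite R N] (i : ℕ) :
    Module.Finite R (ExtModule R (R ⧸ a) (M ⧸ N) i) ↔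
      Module.Finite R (ExtModule R (R ⧸ a) M i) := by
  have hN (i) : Module.Finite R (ExtModule R (R ⧸ a) N i) :=
    prop_extModule (ModuleCat.isFG R) _ ‹Module.Finite R N› i
  exact (prop_iff_of_isoModSerre _ (isoModSerre_map_of_surjective (T := ModuleCat.isFG R)
    N.injective_subtype (LinearMap.exact_subtype_mkQ N) N.mkQ_surjective hN i)).symm

end FD

theorem stmt8 {R : Type u} [CommRing R] [IsNoetherianRing R] (a : Ideal R)
    (n : ℕ) (hn : n ≤ 2) (M : ModuleCat.{u} R)
    (hFD : ∃ N : Submodule R M, N.FG ∧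
      Order.krullDim (Module.support R (M ⧸ N)) ≤ (n : WithBot (WithTop ℕ)))
    (hsupp : Module.support R M ⊆ PrimeSpectrum.zeroLocus (a : Set R)) :
    IsCofinite a M ↔ ∀ i ≤ n, Module.Finite R (extQuot a i M) := by
  obtain ⟨N, hN, hdim⟩ := hFD
  have : Module.Finite R N := Module.Finite.iff_fg.2 hN
  refine ⟨fun h i _ ↦ h.2 i, fun h ↦ ⟨hsupp, fun i ↦ ?_⟩⟩
  simp only [finite_extQuot_iff, ← finite_extModule_quotient_iff N] at h ⊢
  exact finite_extModule_of_krullDim_le hn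
    ((Module.support_subset_of_surjective _ N.mkQ_surjective).trans hsupp) hdim h i
end

section
/- Let R be a commutative noetherian ring with identity, a an ideal of R, and M a minimax R-module (M has a finitely generated submodule N such that M/N is artinian) with Supp_R M ⊆ V(a). Then M is a-cofinite if and only if Hom_R(R/a, M) is a finitely generated R-module. -/
universe u

open CategoryTheory

/-!
Multiplication by `r ∈ a` is zero on `Ext(R/a, -)`. If `A` is artinian, the chain of submodules
`rⁿA` stabilizes at a module `B = rB`, and the vanishing of `r` on `Extⁱ(R/a, B)` makes
`Extⁱ(R/a, ker (r | B)) → Extⁱ(R/a, B)` surjective. With the exact sequence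
`0 → ker rⁿ → A → B → 0`, this reduces finiteness of `Extⁱ(R/a, A)` to modules embedding in `A` and
killed by a power of `r`. Running through generators of `a`, one is left with modules `K` killed by
a power of `a`, and such a `K` is noetherian as soon as its submodule `K[a] ≅ Hom(R/a, K)` is.
A minimax `M` is an extension of an artinian `M/N` by a finitely generated `N`, and
`Hom(R/a, M/N)` lies between `Hom(R/a, M)` and `Ext¹(R/a, N)`.
-/

section AbelianExt

variable {R C : Type*} [CommRing R] [Category* C] [Abelian C] [Linear R C]

section Comparison

variable {X : C} (P : ProjectiveResolution X) (Y : C) (n : ℕ)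

/-- The inclusion of the `n`-cocycles of the complex `Hom(P, Y)` into `Hom(Pₙ, Y)`. -/
noncomputable def cyclesToHom :
    (P.complex.linearYonedaObj R Y).cycles n →ₗ[R] (P.complex.X n ⟶ Y) :=
  ((P.complex.linearYonedaObj R Y).iCycles n).hom

variable {Y n}

lemma cyclesToHom_injective : Function.Injective (cyclesToHom (R := R) P Y n) :=
  (ModuleCat.mono_iff_injective ((P.complex.linearYonedaObj R Y).iCycles n)).1 inferInstance

lemma d_comp_cyclesToHom (x : (P.complex.linearYonedaObj R Y).cycles n) :
    P.complex.d (n + 1) n ≫ cyclesToHom P Y n x = 0 :=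
  congr($((P.complex.linearYonedaObj R Y).iCycles_d n (n + 1)) x)

lemma exists_cyclesToHom_eq {f : P.complex.X n ⟶ Y} (hf : P.complex.d (n + 1) n ≫ f = 0) :
    ∃ x, cyclesToHom (R := R) P Y n x = f := by
  let K := P.complex.linearYonedaObj R Y
  have exact_iCycles := (ShortComplex.mk _ _ (K.iCycles_d n (n + 1))).exact_of_f_is_kernel
    (K.cyclesIsKernel n (n + 1) (by simp))
  exact (ShortComplex.moduleCat_exact_iff _).1 exact_iCycles f hf

lemma homologyπ_succ_eq_zero_iff (x : (P.complex.linearYonedaObj R Y).cycles (n + 1)) :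
    (P.complex.linearYonedaObj R Y).homologyπ (n + 1) x = 0 ↔
      ∃ g, P.complex.d (n + 1) n ≫ g = cyclesToHom P Y (n + 1) x := by
  let K := P.complex.linearYonedaObj R Y
  have toCycles_cyclesToHom (g : P.complex.X n ⟶ Y) :
      cyclesToHom P Y (n + 1) (K.toCycles n (n + 1) g) = P.complex.d (n + 1) n ≫ g :=
    congr($(K.toCycles_i n (n + 1)) g)
  have exact_toCycles :=
    (ShortComplex.mk _ _ (K.toCycles_comp_homologyπ n (n + 1))).exact_of_g_is_cokernel
      (K.homologyIsCokernel n (n + 1) (by simp))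
  constructor
  · intro hx
    obtain ⟨g, rfl⟩ := (ShortComplex.moduleCat_exact_iff _).1 exact_toCycles x hx
    exact ⟨g, (toCycles_cyclesToHom g).symm⟩
  · rintro ⟨g, hg⟩
    obtain rfl := cyclesToHom_injective P ((toCycles_cyclesToHom g).trans hg)
    exact congr($(K.toCycles_comp_homologyπ n (n + 1)) g)

lemma homologyπ_zero_eq_zero_iff (x : (P.complex.linearYonedaObj R Y).cycles 0) :
    (P.complex.linearYonedaObj R Y).homologyπ 0 x = 0 ↔ x = 0 := by
  let K := P.complex.linearYonedaObj R Y
  have : IsIso (K.homologyπ 0) := K.isIso_homologyπ 0 0 (by simp) (K.shape _ _ (by simp))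
  exact map_eq_zero_iff (K.homologyπ 0).hom
    ((ModuleCat.mono_iff_injective (K.homologyπ 0)).1 inferInstance)

variable [HasExt C]

lemma extMk_zero_eq_zero_iff {f : P.complex.X 0 ⟶ Y} (hf : P.complex.d 1 0 ≫ f = 0) :
    P.extMk f 1 rfl hf = 0 ↔ f = 0 := by
  refine ⟨fun h ↦ ?_, by rintro rfl; exact P.extMk_zero 1 rfl⟩
  rw [← P.extEquivCohomologyClass.apply_eq_iff_eq, P.extEquivCohomologyClass_extMk,
    P.extEquivCohomologyClass_zero, CochainComplex.HomComplex.CohomologyClass.mk_eq_zero_iff,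
    CochainComplex.HomComplex.Cocycle.toSingleMk_mem_coboundaries_iff _ _ _ _ _ 1 (by simp)] at h
  obtain ⟨g, hg⟩ := h
  rw [(P.cochainComplex.isZero_of_isStrictlyLE 0 1).eq_zero_of_src g, Limits.comp_zero] at hg
  exact (cancel_epi _).1 (hg.symm.trans Limits.comp_zero.symm)

variable (Y n)

/-- The map sending an `n`-cocycle of the complex `Hom(P, Y)`, for a projective resolution `P`
of `X`, to its class in `Abelian.Ext X Y n`. -/
noncomputable def cyclesToAbelianExt :
    (P.complex.linearYonedaObj R Y).cycles n →ₗ[R] Abelian.Ext X Y n where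
  toFun x := P.extMk (cyclesToHom P Y n x) (n + 1) rfl (d_comp_cyclesToHom P x)
  map_add' x y := by simp only [map_add, P.add_extMk]
  map_smul' r x := by
    simp only [map_smul, RingHom.id_apply, Abelian.Ext.smul_eq_comp_mk₀, P.extMk_comp_mk₀,
      Linear.comp_smul, Category.comp_id]

lemma cyclesToAbelianExt_surjective :
    Function.Surjective (cyclesToAbelianExt (R := R) P Y n) := by
  intro α
  obtain ⟨f, hf, rfl⟩ := P.extMk_surjective α (n + 1) rfl
  obtain ⟨x, rfl⟩ := exists_cyclesToHom_eq (R := R) P hf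
  exact ⟨x, rfl⟩

lemma ker_cyclesToAbelianExt :
    LinearMap.ker (cyclesToAbelianExt (R := R) P Y n) =
      LinearMap.ker ((P.complex.linearYonedaObj R Y).homologyπ n).hom := by
  ext x
  cases n with
  | zero =>
    exact (extMk_zero_eq_zero_iff P (d_comp_cyclesToHom P x)).trans
      ((map_eq_zero_iff _ (cyclesToHom_injective P)).trans
        (homologyπ_zero_eq_zero_iff P x).symm)
  | succ n =>
    exact (P.extMk_eq_zero_iff _ _ rfl (d_comp_cyclesToHom P x) n rfl).trans
      (homologyπ_succ_eq_zero_iff P x).symm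

end Comparison

variable [HasExt C]

/-- The comparison between the two constructions of `Ext`: the functor `Ext R C n`, derived in
the first variable, and the morphisms `Abelian.Ext` of the derived category. -/
noncomputable def extEquivAbelianExt [EnoughProjectives C] (X Y : C) (n : ℕ) :
    ((Ext R C n).obj (Opposite.op X)).obj Y ≃ₗ[R] Abelian.Ext X Y n :=
  let P := ProjectiveResolution.of X
  (P.isoExt n Y).toLinearEquiv ≪≫ₗ
    (LinearMap.quotKerEquivOfSurjective _ ((ModuleCat.epi_iff_surjective _).1
      (inferInstanceAs (Epi ((P.complex.linearYonedaObj R Y).homologyπ n))))).symm ≪≫ₗ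
    Submodule.quotEquivOfEq _ _ (ker_cyclesToAbelianExt P Y n).symm ≪≫ₗ
    LinearMap.quotKerEquivOfSurjective _ (cyclesToAbelianExt_surjective P Y n)

variable (X : C) {S : ShortComplex C}

lemma isNoetherian_ext_X₂ (hS : S.ShortExact) (i : ℕ) [IsNoetherian R (Abelian.Ext X S.X₁ i)]
    [IsNoetherian R (Abelian.Ext X S.X₃ i)] :
    IsNoetherian R (Abelian.Ext X S.X₂ i) := by
  refine isNoetherian_of_range_eq_ker
    ((Abelian.Ext.mk₀ S.f).postcompOfLinear R X (add_zero i))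
    ((Abelian.Ext.mk₀ S.g).postcompOfLinear R X (add_zero i)) (le_antisymm ?_ fun x hx ↦ ?_)
  · rintro _ ⟨x, rfl⟩
    simp
  · exact Abelian.Ext.covariant_sequence_exact₂ X hS x hx

lemma isNoetherian_ext_X₃ (hS : S.ShortExact) (i : ℕ) [IsNoetherian R (Abelian.Ext X S.X₂ i)]
    [IsNoetherian R (Abelian.Ext X S.X₁ (i + 1))] :
    IsNoetherian R (Abelian.Ext X S.X₃ i) := by
  refine isNoetherian_of_range_eq_ker
    ((Abelian.Ext.mk₀ S.g).postcompOfLinear R X (add_zero i))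
    (hS.extClass.postcompOfLinear R X rfl) (le_antisymm ?_ fun x hx ↦ ?_)
  · rintro _ ⟨x, rfl⟩
    simp
  · exact Abelian.Ext.covariant_sequence_exact₃ X hS x rfl hx

end AbelianExt

section Torsion

variable {R A B : Type*} [CommRing R] [AddCommGroup A] [Module R A] [AddCommGroup B] [Module R B]
  (a : Ideal R)

lemma isNoetherian_torsionBySet_of_injective (s : Set R) (f : A →ₗ[R] B)
    (hf : Function.Injective f) [IsNoetherian R (Submodule.torsionBySet R B s)] :
    IsNoetherian R (Submodule.torsionBySet R A s) := by
  have map_torsion : ∀ x ∈ Submodule.torsionBySet R A s, f x ∈ Submodule.torsionBySet R B s := by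
    intro x hx
    rw [Submodule.mem_torsionBySet_iff] at hx ⊢
    intro r
    rw [← map_smul, hx r, map_zero]
  exact isNoetherian_of_injective (f.restrict map_torsion) fun x y h ↦
    Subtype.ext (hf congr($(h).1))

lemma isNoetherian_torsionBySet_of_isNoetherian_hom [IsNoetherian R ((R ⧸ a) →ₗ[R] A)] :
    IsNoetherian R (Submodule.torsionBySet R A (a : Set R)) := by
  have := isNoetherian_range (LinearMap.applyₗ (1 : R ⧸ a) : ((R ⧸ a) →ₗ[R] A) →ₗ[R] A)
  refine isNoetherian_of_le (fun x hx ↦ ?_)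
    (t := LinearMap.range (LinearMap.applyₗ (1 : R ⧸ a) : ((R ⧸ a) →ₗ[R] A) →ₗ[R] A))
  have le_ker : a ≤ LinearMap.ker (LinearMap.toSpanSingleton R A x) := fun r hr ↦
    (Submodule.mem_torsionBySet_iff _ _).1 hx ⟨r, hr⟩
  exact ⟨a.liftQ _ le_ker, one_smul R x⟩

variable {a}

lemma isNoetherian_torsionBySet_mul {b : Ideal R} (hb : b.FG)
    [IsNoetherian R (Submodule.torsionBySet R A (a : Set R))]
    [IsNoetherian R (Submodule.torsionBySet R A (b : Set R))] :
    IsNoetherian R (Submodule.torsionBySet R A ((a * b : Ideal R) : Set R)) := by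
  obtain ⟨s, rfl⟩ := hb
  let T := Submodule.torsionBySet R A ((a * Ideal.span s : Ideal R) : Set R)
  have smul_mem (g : s) (x : T) :
      (g : R) • (x : A) ∈ Submodule.torsionBySet R A (a : Set R) := by
    rw [Submodule.mem_torsionBySet_iff]
    rintro ⟨r, hr⟩
    rw [smul_smul]
    exact (Submodule.mem_torsionBySet_iff _ _).1 x.2
      ⟨r * g, Ideal.mul_mem_mul hr (Ideal.subset_span g.2)⟩
  let φ : T →ₗ[R] s → Submodule.torsionBySet R A (a : Set R) := LinearMap.pi fun g ↦
    (LinearMap.lsmul R A g ∘ₗ T.subtype).codRestrict _ (smul_mem g)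
  have ker_le :
      LinearMap.ker φ ≤ Submodule.torsionBySet R T (Ideal.span (s : Set R) : Set R) := by
    intro x hx
    rw [← Submodule.torsionBySet_eq_torsionBySet_span, Submodule.mem_torsionBySet_iff]
    exact fun g ↦ Subtype.ext congr(($hx g).1)
  have := isNoetherian_torsionBySet_of_injective (Ideal.span (s : Set R) : Set R)
    T.subtype T.injective_subtype
  have := isNoetherian_of_le ker_le
  exact isNoetherian_of_range_eq_ker (LinearMap.ker φ).subtype φ (Submodule.range_subtype _)

lemma isNoetherian_torsionBySet_pow (ha : a.FG)
    [IsNoetherian R (Submodule.torsionBySet R A (a : Set R))] (n : ℕ) :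
    IsNoetherian R (Submodule.torsionBySet R A ((a ^ n : Ideal R) : Set R)) := by
  induction n with
  | zero =>
    rw [pow_zero, Ideal.one_eq_top, Submodule.top_coe, Submodule.torsionBySet_univ]
    infer_instance
  | succ n _ =>
    rw [pow_succ]
    exact isNoetherian_torsionBySet_mul ha

lemma isNoetherian_of_le_radical_annihilator (ha : a.FG)
    (h : a ≤ (Module.annihilator R A).radical)
    [IsNoetherian R (Submodule.torsionBySet R A (a : Set R))] : IsNoetherian R A := by
  obtain ⟨n, hn⟩ := Ideal.exists_pow_le_of_le_radical_of_fg h ha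
  have torsion_eq_top : Submodule.torsionBySet R A ((a ^ n : Ideal R) : Set R) = ⊤ :=
    (Module.isTorsionBySet_iff_torsionBySet_eq_top _).1
      ((Module.isTorsionBySet_iff_subset_annihilator R A).2 hn)
  have := isNoetherian_torsionBySet_pow (A := A) ha n
  exact isNoetherian_top_iff.1 (torsion_eq_top ▸ this)

end Torsion

section ModuleExt

variable {R : Type u} [CommRing R] {A : Type u} [AddCommGroup A] [Module R A]

lemma smul_ext_eq_zero_of_mem_annihilator {X Y : ModuleCat.{u} R} {r : R}
    (hr : r ∈ Module.annihilator R X) {i : ℕ} (α : Abelian.Ext X Y i) : r • α = 0 := by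
  have smul_id : r • 𝟙 X = 0 := by
    ext x
    exact Module.mem_annihilator.1 hr x
  rw [← Abelian.Ext.mk₀_id_comp α, ← Abelian.Ext.smul_comp, ← Abelian.Ext.mk₀_smul, smul_id,
    Abelian.Ext.mk₀_zero, Abelian.Ext.zero_comp]

lemma isNoetherian_ext_of_surjective_lsmul {X : ModuleCat.{u} R} {r : R}
    (hr : r ∈ Module.annihilator R X) (hsurj : Function.Surjective (LinearMap.lsmul R A r)) (i : ℕ)
    [IsNoetherian R (Abelian.Ext X (ModuleCat.of R (LinearMap.ker (LinearMap.lsmul R A r))) i)] :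
    IsNoetherian R (Abelian.Ext X (ModuleCat.of R A) i) := by
  have g_eq : (LinearMap.lsmul R A r).shortComplexKer.g = r • 𝟙 (ModuleCat.of R A) := rfl
  refine isNoetherian_of_surjective ((Abelian.Ext.mk₀
    (LinearMap.lsmul R A r).shortComplexKer.f).postcompOfLinear R X (add_zero i))
    (LinearMap.range_eq_top.2 fun α ↦ ?_)
  refine Abelian.Ext.covariant_sequence_exact₂ X (LinearMap.shortExact_shortComplexKer hsurj) α ?_
  rw [g_eq]
  exact (Abelian.Ext.smul_eq_comp_mk₀ α r).symm.trans (smul_ext_eq_zero_of_mem_annihilator hr α)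

lemma isNoetherian_torsionBySet_of_isNoetherian_ext_zero {a : Ideal R}
    [IsNoetherian R (Abelian.Ext (ModuleCat.of R (R ⧸ a)) (ModuleCat.of R A) 0)] :
    IsNoetherian R (Submodule.torsionBySet R A (a : Set R)) := by
  have := isNoetherian_of_linearEquiv ((Abelian.Ext.linearEquiv₀ (R := R)).trans
    (ModuleCat.homLinearEquiv (S := R) (M := ModuleCat.of R (R ⧸ a)) (N := ModuleCat.of R A)))
  exact isNoetherian_torsionBySet_of_isNoetherian_hom a

lemma exists_surjective_lsmul_range_pow [IsArtinian R A] (r : R) :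
    ∃ n : ℕ, Function.Surjective
      (LinearMap.lsmul R (LinearMap.range (LinearMap.lsmul R A (r ^ n))) r) := by
  obtain ⟨n, hn⟩ := IsArtinian.range_smul_pow_stabilizes A r
  refine ⟨n, ?_⟩
  rintro ⟨_, x, rfl⟩
  obtain ⟨z, hz⟩ : r ^ n • x ∈ LinearMap.range (r ^ (n + 1) • LinearMap.id : A →ₗ[R] A) :=
    hn (n + 1) n.le_succ ▸ ⟨x, rfl⟩
  refine ⟨⟨r ^ n • z, z, rfl⟩, Subtype.ext ?_⟩
  change r • r ^ n • z = r ^ n • x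
  rw [smul_smul, ← pow_succ']
  exact hz

lemma mem_annihilator_ker_lsmul (r : R) :
    r ∈ Module.annihilator R (LinearMap.ker (LinearMap.lsmul R A r)) :=
  Module.mem_annihilator.2 fun x ↦ Subtype.ext x.2

lemma isNoetherian_ext_of_forall_injective [IsArtinian R A] {X : ModuleCat.{u} R} {r : R}
    (hr : r ∈ Module.annihilator R X) (i : ℕ)
    (h : ∀ {K : Type u} [AddCommGroup K] [Module R K] (ι : K →ₗ[R] A), Function.Injective ι →
      r ∈ (Module.annihilator R K).radical →
      IsNoetherian R (Abelian.Ext X (ModuleCat.of R K) i)) :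
    IsNoetherian R (Abelian.Ext X (ModuleCat.of R A) i) := by
  obtain ⟨n, hn⟩ := exists_surjective_lsmul_range_pow (A := A) r
  let f := LinearMap.lsmul R A (r ^ n)
  let B := LinearMap.range f
  have := h (B.subtype ∘ₗ (LinearMap.ker (LinearMap.lsmul R B r)).subtype)
    (B.injective_subtype.comp (Submodule.injective_subtype _))
    (Ideal.le_radical (mem_annihilator_ker_lsmul r))
  have ext_range := isNoetherian_ext_of_surjective_lsmul hr hn i
  have ext_ker := h (LinearMap.ker f.rangeRestrict).subtype (Submodule.injective_subtype _)
    ⟨n, f.ker_rangeRestrict.symm ▸ mem_annihilator_ker_lsmul (r ^ n)⟩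
  exact isNoetherian_ext_X₂ X (LinearMap.shortExact_shortComplexKer f.surjective_rangeRestrict) i

variable [IsNoetherianRing R] [IsArtinian R A] {X : ModuleCat.{u} R} [Module.Finite R X]
  {a : Ideal R} [IsNoetherian R (Submodule.torsionBySet R A (a : Set R))]

lemma isNoetherian_ext_of_le_radical_annihilator_sup_span (s : Finset R)
    (hs : (s : Set R) ⊆ Module.annihilator R X)
    (h : a ≤ (Module.annihilator R A).radical ⊔ Ideal.span s) (i : ℕ) :
    IsNoetherian R (Abelian.Ext X (ModuleCat.of R A) i) := by
  induction s using Finset.cons_induction generalizing A with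
  | empty =>
    have := isNoetherian_of_le_radical_annihilator (A := A) a.fg_of_isNoetherianRing
      (by simpa only [Finset.coe_empty, Ideal.span_empty, sup_bot_eq] using h)
    exact isNoetherian_of_isNoetherianRing_of_finite R _
  | cons r s _ ih =>
    rw [Finset.coe_cons, Set.insert_subset_iff] at hs
    refine isNoetherian_ext_of_forall_injective hs.1 i fun {K} _ _ ι hι hr ↦ ?_
    have := isArtinian_of_injective ι hι
    have := isNoetherian_torsionBySet_of_injective (a : Set R) ι hι
    have radical_le := Ideal.radical_mono (ι.annihilator_le_of_injective hι)
    refine ih hs.2 (h.trans (sup_le (radical_le.trans le_sup_left) ?_))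
    rw [Finset.coe_cons, Ideal.span_insert]
    exact sup_le_sup_right ((Ideal.span_singleton_le_iff_mem _).2 hr) _

theorem isNoetherian_ext_of_isArtinian (ha : a ≤ Module.annihilator R X) (i : ℕ) :
    IsNoetherian R (Abelian.Ext X (ModuleCat.of R A) i) := by
  obtain ⟨s, hs⟩ := a.fg_of_isNoetherianRing
  exact isNoetherian_ext_of_le_radical_annihilator_sup_span s
    (Submodule.subset_span.trans (hs.trans_le ha)) (hs.ge.trans le_sup_right) i

end ModuleExt

section Minimax

variable {R : Type u} [CommRing R] [IsNoetherianRing R] (a : Ideal R)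

theorem isNoetherian_ext_of_isArtinian_quotient {M : Type u} [AddCommGroup M] [Module R M]
    {N : Submodule R M} [Module.Finite R N] [IsArtinian R (M ⧸ N)]
    [IsNoetherian R (Abelian.Ext (ModuleCat.of R (R ⧸ a)) (ModuleCat.of R M) 0)] (i : ℕ) :
    IsNoetherian R (Abelian.Ext (ModuleCat.of R (R ⧸ a)) (ModuleCat.of R M) i) := by
  have hS := LinearMap.shortExact_shortComplexKer N.mkQ_surjective
  have : Module.Finite R (LinearMap.ker N.mkQ) := N.ker_mkQ.symm ▸ inferInstance
  have ext_ker (i : ℕ) :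
      IsNoetherian R (Abelian.Ext (ModuleCat.of R (R ⧸ a)) N.mkQ.shortComplexKer.X₁ i) :=
    isNoetherian_of_isNoetherianRing_of_finite R _
  have hom_quotient := isNoetherian_ext_X₃ (R := R) (ModuleCat.of R (R ⧸ a)) hS 0
  have := isNoetherian_torsionBySet_of_isNoetherian_ext_zero (A := M ⧸ N) (a := a)
  have ext_quotient := isNoetherian_ext_of_isArtinian (A := M ⧸ N)
    (X := ModuleCat.of R (R ⧸ a)) (a := a) Ideal.annihilator_quotient.ge i
  exact isNoetherian_ext_X₂ _ hS i

theorem stmt9_general (M : ModuleCat.{u} R)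
    (hmm : ∃ N : Submodule R M, N.FG ∧ IsArtinian R (M ⧸ N)) :
    (∀ i, Module.Finite R (extQuot a i M)) ↔ Module.Finite R (extQuot a 0 M) := by
  refine ⟨fun h ↦ h 0, fun _ i ↦ ?_⟩
  obtain ⟨N, hN, _⟩ := hmm
  have := Module.Finite.iff_fg.2 hN
  let e (i : ℕ) : extQuot a i M ≃ₗ[R] Abelian.Ext (ModuleCat.of R (R ⧸ a)) M i :=
    extEquivAbelianExt _ M i
  have := Module.Finite.equiv (e 0)
  have : IsNoetherian R (Abelian.Ext (ModuleCat.of R (R ⧸ a)) (ModuleCat.of R M) 0) :=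
    isNoetherian_of_isNoetherianRing_of_finite R (Abelian.Ext (ModuleCat.of R (R ⧸ a)) M 0)
  have := isNoetherian_ext_of_isArtinian_quotient a (N := N) i
  exact Module.Finite.equiv (e i).symm

end Minimax

theorem stmt9 {R : Type u} [CommRing R] [IsNoetherianRing R] (a : Ideal R)
    (M : ModuleCat.{u} R)
    (hmm : ∃ N : Submodule R M, N.FG ∧ IsArtinian R (M ⧸ N))
    (hsupp : Module.support R M ⊆ PrimeSpectrum.zeroLocus (a : Set R)) :
    IsCofinite a M ↔ Module.Finite R (extQuot a 0 M) :=
  (and_iff_right hsupp).trans (stmt9_general a M hmm)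
end
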